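/- arXiv:math/0502128 — 2 statements merged into one kernel-verified Lean document; each statement's English description precedes it below -/
import Mathlib

section
/- Let (U, •, g̃, E) be a Frobenius manifold with intersection metric g on a nonempty connected open set U ⊆ ℝ^n, and let Ω be a smooth nowhere-vanishing real function on U. Set h = Ω²g and h̃ = Ω²g̃, and assume the triple (h, h̃, E) is regular. Then the following statements are equivalent: (1) the pair (h, h̃) together with E is a weak quasi-homogeneous pencil; (2) g(E) ∧ dΩ = 0 on U, i.e. (Σ_j g_{ij}E^j)·∂_kΩ = (Σ_j g_{kj}E^j)·∂_iΩ for all indices i, k; (3) (U, •, h̃, E) is an F-manifold; (4) (U, •, h̃, E) is a weak F-manifold. -/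
open scoped BigOperators

noncomputable section

/-- Points of ℝⁿ. -/
abbrev Pt (n : ℕ) := Fin n → ℝ
/-- Vector fields (globally defined functions; conditions are imposed on an open set). -/
abbrev VF (n : ℕ) := Pt n → Fin n → ℝ
/-- 1-forms. -/
abbrev OneForm (n : ℕ) := Pt n → Fin n → ℝ
/-- Metrics: smooth maps into symmetric invertible matrices. -/
abbrev Met (n : ℕ) := Pt n → Matrix (Fin n) (Fin n) ℝ
/-- (1,2)-tensor fields (multiplications on tangent vectors): components `c t k i j` = c^k_{ij}(t). -/
abbrev Mul2 (n : ℕ) := Pt n → Fin n → Fin n → Fin n → ℝ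

variable {n : ℕ}

/-- Partial derivative ∂ᵢ f (t). -/
def pder (i : Fin n) (f : Pt n → ℝ) (t : Pt n) : ℝ :=
  fderiv ℝ f t (Pi.single i 1)

/-- Smoothness (on `U`) of a vector field or a 1-form. -/
def SmoothVF (U : Set (Pt n)) (X : VF n) : Prop :=
  ∀ k, ContDiffOn ℝ (⊤ : ℕ∞) (fun t => X t k) U

def SmoothMet (U : Set (Pt n)) (g : Met n) : Prop :=
  ∀ i j, ContDiffOn ℝ (⊤ : ℕ∞) (fun t => g t i j) U

def SmoothMul2 (U : Set (Pt n)) (c : Mul2 n) : Prop :=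
  ∀ k i j, ContDiffOn ℝ (⊤ : ℕ∞) (fun t => c t k i j) U

/-- `g` is a (pseudo-Riemannian) metric on `U`: smooth, symmetric, invertible. -/
def IsMetricOn (U : Set (Pt n)) (g : Met n) : Prop :=
  SmoothMet U g ∧ ∀ t ∈ U, (g t).IsSymm ∧ IsUnit (g t)

/-- The 1-form g(X). -/
def mdown (g : Met n) (X : VF n) : OneForm n := fun t k => ∑ j, g t k j * X t j
/-- The vector field g*α. -/
def mup (g : Met n) (α : OneForm n) : VF n := fun t k => ∑ j, (g t)⁻¹ k j * α t j
/-- g*(α, β). -/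
def mup2 (g : Met n) (α β : OneForm n) (t : Pt n) : ℝ :=
  ∑ i, ∑ j, (g t)⁻¹ i j * α t i * β t j
/-- g(X, Y). -/
def mdown2 (g : Met n) (X Y : VF n) (t : Pt n) : ℝ :=
  ∑ i, ∑ j, g t i j * X t i * Y t j

/-- Christoffel symbols Γ(g)^k_{ij}(t). -/
def chr (g : Met n) (k i j : Fin n) (t : Pt n) : ℝ :=
  (1/2) * ∑ l, (g t)⁻¹ k l *
    (pder i (fun s => g s j l) t + pder j (fun s => g s i l) t - pder l (fun s => g s i j) t)

/-- Levi-Civita covariant derivative ∇^g_X Y of a vector field. -/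
def covV (g : Met n) (X Y : VF n) : VF n :=
  fun t k => ∑ i, X t i * (pder i (fun s => Y s k) t + ∑ m, chr g k i m t * Y t m)

/-- Levi-Civita covariant derivative ∇^g_X α of a 1-form. -/
def covF (g : Met n) (X : VF n) (α : OneForm n) : OneForm n :=
  fun t k => ∑ i, X t i * (pder i (fun s => α s k) t - ∑ m, chr g m i k t * α t m)

/-- Lie bracket [X, Y]. -/
def vbr (X Y : VF n) : VF n :=
  fun t k => ∑ i, (X t i * pder i (fun s => Y s k) t - Y t i * pder i (fun s => X s k) t)

/-- Curvature R(g)_{X,Y} Z = ∇_X ∇_Y Z − ∇_Y ∇_X Z − ∇_{[X,Y]} Z. -/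
def curvV (g : Met n) (X Y Z : VF n) : VF n :=
  fun t k => covV g X (covV g Y Z) t k - covV g Y (covV g X Z) t k
    - covV g (vbr X Y) Z t k

/-- Curvature acting on 1-forms: (R(g)_{X,Y} α)(Z) = −α(R(g)_{X,Y} Z). -/
def curvF (g : Met n) (X Y : VF n) (α : OneForm n) : OneForm n :=
  fun t k => - ∑ m, α t m * curvV g X Y (fun _ => Pi.single k 1) t m

/-- `g` is flat on `U`: the curvature tensor vanishes identically. -/
def FlatOn (U : Set (Pt n)) (g : Met n) : Prop :=
  ∀ X Y Z : VF n, SmoothVF U X → SmoothVF U Y → SmoothVF U Z →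
    ∀ t ∈ U, ∀ k, curvV g X Y Z t k = 0

/-- `g` has constant sectional curvature `s` on `U`. -/
def ConstSecCurv (U : Set (Pt n)) (g : Met n) (s : ℝ) : Prop :=
  ∀ X Y : VF n, SmoothVF U X → SmoothVF U Y → ∀ t ∈ U,
    mdown2 g (curvV g X Y Y) X t
      = s * (mdown2 g X X t * mdown2 g Y Y t - (mdown2 g X Y t) ^ 2)

/-- The metric g_λ of the pencil: its inverse matrix is g⁻¹ + λ g̃⁻¹. -/
def pencil (g g' : Met n) (lam : ℝ) : Met n :=
  fun t => ((g t)⁻¹ + lam • (g' t)⁻¹)⁻¹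

/-- Almost compatibility of the pair (g, g̃) on `U`. -/
def AlmostCompatible (U : Set (Pt n)) (g g' : Met n) : Prop :=
  ∀ lam : ℝ, (∀ t ∈ U, IsUnit ((g t)⁻¹ + lam • (g' t)⁻¹)) →
    ∀ X : VF n, SmoothVF U X → ∀ α : OneForm n, SmoothVF U α →
      ∀ t ∈ U, ∀ k,
        mup (pencil g g' lam) (covF (pencil g g' lam) X α) t k
          = mup g (covF g X α) t k + lam * mup g' (covF g' X α) t k

/-- Compatibility of the pair (g, g̃) on `U`. -/
def Compatible (U : Set (Pt n)) (g g' : Met n) : Prop :=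
  AlmostCompatible U g g' ∧
  ∀ lam : ℝ, (∀ t ∈ U, IsUnit ((g t)⁻¹ + lam • (g' t)⁻¹)) →
    ∀ X Y : VF n, SmoothVF U X → SmoothVF U Y →
      ∀ α : OneForm n, SmoothVF U α →
        ∀ t ∈ U, ∀ k,
          mup (pencil g g' lam) (curvF (pencil g g' lam) X Y α) t k
            = mup g (curvF g X Y α) t k + lam * mup g' (curvF g' X Y α) t k

/-- The multiplication α ∘ β = ∇^g_{g*α} β − ∇^{g̃}_{g*α} β on 1-forms. -/
def circM (g g' : Met n) (α β : OneForm n) : OneForm n :=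
  fun t k => covF g (mup g α) β t k - covF g' (mup g α) β t k

/-- The endomorphism T(u) = g(E) ∘ u of 1-forms, as a pointwise matrix
(`∘` being tensorial in its second argument). -/
def Tmat (g g' : Met n) (E : VF n) (t : Pt n) : Matrix (Fin n) (Fin n) ℝ :=
  Matrix.of fun k m => circM g g' (mdown g E) (fun _ => Pi.single m 1) t k

/-- The triple (g, g̃, E) is regular on `U` if T is invertible at every point. -/
def RegularTriple (U : Set (Pt n)) (g g' : Met n) (E : VF n) : Prop :=
  ∀ t ∈ U, IsUnit (Tmat g g' E t)

/-- T⁻¹(v). -/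
def TinvF (g g' : Met n) (E : VF n) (v : OneForm n) : OneForm n :=
  fun t k => ∑ m, (Tmat g g' E t)⁻¹ k m * v t m

/-- The multiplication u • v = u ∘ T⁻¹(v) on 1-forms. -/
def bulF (g g' : Met n) (E : VF n) (u v : OneForm n) : OneForm n :=
  circM g g' u (TinvF g g' E v)

/-- The multiplication • on vector fields: X • Y = g̃*((g̃X) • (g̃Y)). -/
def bulV (g g' : Met n) (E : VF n) (X Y : VF n) : VF n :=
  mup g' (bulF g g' E (mdown g' X) (mdown g' Y))

/-- The multiplication • associated to the regular triple (g, g̃, E), as a (1,2)-tensor. -/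
def bulMul (g g' : Met n) (E : VF n) : Mul2 n :=
  fun t k i j => bulV g g' E (fun _ => Pi.single i 1) (fun _ => Pi.single j 1) t k

/-- Applying a (1,2)-tensor to vector fields. -/
def mapp (c : Mul2 n) (X Y : VF n) : VF n :=
  fun t k => ∑ i, ∑ j, c t k i j * X t i * Y t j

/-- Transporting a multiplication on tangent vectors to a multiplication
on 1-forms via the metric: u • v := g̃((g̃*u) • (g̃*v)). -/
def formMul (g' : Met n) (c : Mul2 n) (u v : OneForm n) : OneForm n :=
  mdown g' (mapp c (mup g' u) (mup g' v))

/-- Lie derivative of a function. -/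
def lieFun (E : VF n) (φ : Pt n → ℝ) : Pt n → ℝ :=
  fun t => ∑ i, E t i * pder i φ t

/-- Lie derivative of a 1-form: (L_E α)(X) = E(α(X)) − α([E,X]). -/
def lieOne (E : VF n) (α : OneForm n) : OneForm n :=
  fun t k => (∑ i, E t i * pder i (fun s => α s k) t) + ∑ i, α t i * pder k (fun s => E s i) t

/-- Lie derivative of a metric: (L_E g)(X,Y) = E(g(X,Y)) − g([E,X],Y) − g(X,[E,Y]). -/
def lieMet (E : VF n) (g : Met n) : Met n := fun t =>
  Matrix.of fun k j =>
    (∑ i, E t i * pder i (fun s => g s k j) t)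
    + (∑ i, g t i j * pder k (fun s => E s i) t)
    + (∑ i, g t k i * pder j (fun s => E s i) t)

/-- Lie derivative of a multiplication ((1,2)-tensor):
(L_E c)(u,v) = L_E(c(u,v)) − c(L_E u, v) − c(u, L_E v), componentwise. -/
def lieMul (E : VF n) (c : Mul2 n) : Mul2 n :=
  fun t k i j =>
    vbr E (mapp c (fun _ => Pi.single i 1) (fun _ => Pi.single j 1)) t k
    - mapp c (vbr E (fun _ => Pi.single i 1)) (fun _ => Pi.single j 1) t k
    - mapp c (fun _ => Pi.single i 1) (vbr E (fun _ => Pi.single j 1)) t k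

/-- Lie derivative of a multiplication on 1-forms (applied to the pencil multiplication ∘). -/
def lieCirc (E : VF n) (g g' : Met n) (u v : OneForm n) : OneForm n :=
  fun t k => lieOne E (circM g g' u v) t k - circM g g' (lieOne E u) v t k
    - circM g g' u (lieOne E v) t k

/-- ∇^g_X(•)(Y,Z) := ∇^g_X(Y•Z) − (∇^g_X Y)•Z − Y•(∇^g_X Z), for a multiplication c. -/
def covMul (g : Met n) (c : Mul2 n) (X Y Z : VF n) : VF n :=
  fun t k => covV g X (mapp c Y Z) t k - mapp c (covV g X Y) Z t k
    - mapp c Y (covV g X Z) t k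

/-- The (4,0)-tensor ∇^g(•)(X,Y,Z,V) := g(∇^g_X(•)(Y,Z), V). -/
def covMul4 (g : Met n) (c : Mul2 n) (X Y Z V : VF n) (t : Pt n) : ℝ :=
  mdown2 g (covMul g c X Y Z) V t

/-- Total symmetry of the (4,0)-tensor ∇^g(•) (the F-manifold condition). -/
def TotSym (U : Set (Pt n)) (g : Met n) (c : Mul2 n) : Prop :=
  ∀ X Y Z V : VF n, SmoothVF U X → SmoothVF U Y → SmoothVF U Z → SmoothVF U V →
    ∀ t ∈ U,
      covMul4 g c X Y Z V t = covMul4 g c Y X Z V t ∧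
      covMul4 g c X Y Z V t = covMul4 g c X Z Y V t ∧
      covMul4 g c X Y Z V t = covMul4 g c X Y V Z t

/-- Weak F-manifold structure (U, •, g̃, E), with identity `e`, •-inverse `Einv` of E,
and rescaling functions `Dt` (for the metric) and `k` (for the multiplication). -/
structure IsWeakF (U : Set (Pt n)) (c : Mul2 n) (g' : Met n) (E e Einv : VF n)
    (Dt k : Pt n → ℝ) : Prop where
  met : IsMetricOn U g'
  smooth_c : SmoothMul2 U c
  smooth_E : SmoothVF U E
  smooth_e : SmoothVF U e
  smooth_Einv : SmoothVF U Einv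
  smooth_Dt : ContDiffOn ℝ (⊤ : ℕ∞) Dt U
  smooth_k : ContDiffOn ℝ (⊤ : ℕ∞) k U
  comm : ∀ t ∈ U, ∀ a i j, c t a i j = c t a j i
  assoc : ∀ t ∈ U, ∀ a x y z, (∑ m, c t a m z * c t m x y) = ∑ m, c t a x m * c t m y z
  unit : ∀ t ∈ U, ∀ a i, (∑ j, c t a j i * e t j) = if a = i then (1 : ℝ) else 0
  invar : ∀ t ∈ U, ∀ x y z, (∑ m, g' t m z * c t m x y) = ∑ m, g' t x m * c t m y z
  lie_g : ∀ t ∈ U, ∀ i j, lieMet E g' t i j = Dt t * g' t i j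
  lie_c : ∀ t ∈ U, ∀ a i j, lieMul E c t a i j = k t * c t a i j
  e_inv : ∀ t ∈ U, ∀ a, (∑ i, ∑ j, c t a i j * E t i * Einv t j) = e t a
  sym_E : ∀ Y Z V : VF n, SmoothVF U Y → SmoothVF U Z → SmoothVF U V → ∀ t ∈ U,
    covMul4 g' c E Y Z V t = covMul4 g' c Y E Z V t

/-- Weak quasi-homogeneous pencil (h, h̃) with Euler vector field E. -/
structure IsWQH (U : Set (Pt n)) (h h' : Met n) (E : VF n) (D Dt : Pt n → ℝ) : Prop where
  met_h : IsMetricOn U h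
  met_h' : IsMetricOn U h'
  compat : Compatible U h h'
  smooth_E : SmoothVF U E
  smooth_D : ContDiffOn ℝ (⊤ : ℕ∞) D U
  smooth_Dt : ContDiffOn ℝ (⊤ : ℕ∞) Dt U
  lie_h' : ∀ t ∈ U, ∀ i j, lieMet E h' t i j = Dt t * h' t i j
  cov_E : ∀ X : VF n, SmoothVF U X → ∀ t ∈ U, ∀ a, covV h X E t a = (D t / 2) * X t a
  diff_const : ∃ c₀ : ℝ, ∀ t ∈ U, Dt t - D t = c₀

/-- Frobenius manifold structure (U, •, g̃, E). -/
structure IsFrob (U : Set (Pt n)) (c : Mul2 n) (g' : Met n) (E e : VF n) (D k : ℝ) : Prop where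
  met : IsMetricOn U g'
  flat : FlatOn U g'
  smooth_c : SmoothMul2 U c
  smooth_E : SmoothVF U E
  smooth_e : SmoothVF U e
  comm : ∀ t ∈ U, ∀ a i j, c t a i j = c t a j i
  assoc : ∀ t ∈ U, ∀ a x y z, (∑ m, c t a m z * c t m x y) = ∑ m, c t a x m * c t m y z
  unit : ∀ t ∈ U, ∀ a i, (∑ j, c t a j i * e t j) = if a = i then (1 : ℝ) else 0
  invar : ∀ t ∈ U, ∀ x y z, (∑ m, g' t m z * c t m x y) = ∑ m, g' t x m * c t m y z
  e_par : ∀ X : VF n, SmoothVF U X → ∀ t ∈ U, ∀ a, covV g' X e t a = 0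
  tot_sym : TotSym U g' c
  nabla2E : ∀ X Y : VF n, SmoothVF U X → SmoothVF U Y → ∀ t ∈ U, ∀ a,
    covV g' X (covV g' Y E) t a - covV g' (covV g' X Y) E t a = 0
  lie_g : ∀ t ∈ U, ∀ i j, lieMet E g' t i j = D * g' t i j
  lie_c : ∀ t ∈ U, ∀ a i j, lieMul E c t a i j = k * c t a i j

/-- The intersection metric `g` of a Frobenius manifold: g*g̃ = E•, together with
its standard properties. -/
structure IsIntersection (U : Set (Pt n)) (c : Mul2 n) (g g' : Met n) (E : VF n)
    (d : ℝ) : Prop where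
  met : IsMetricOn U g
  defn : ∀ t ∈ U, ∀ a j, (∑ l, (g t)⁻¹ a l * g' t l j) = ∑ i, c t a i j * E t i
  lie_g : ∀ t ∈ U, ∀ i j, lieMet E g t i j = (1 - d) * g t i j
  compat : Compatible U g g'
  regular : RegularTriple U g g' E
  mul_eq : ∀ t ∈ U, ∀ a i j, bulMul g g' E t a i j = c t a i j

/-!
Write `θ = dΩ / Ω`. Under `G ↦ Ω² G` the Levi-Civita connection changes by the tensor
`θ(X) Y + θ(Y) X - G(X, Y) θ^♯`. Up to the factor `Ω⁻²`, the raised covariant derivative of 1-forms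
therefore changes by an expression that is linear in the inverse metric, and the raised curvature by
one that is linear in it along an almost compatible pencil. So compatibility is conformally
invariant.

Since `2 g(∇_X E, Y) = (L_E g)(X, Y) + d(g(E))(X, Y)`, the derivative `∇E` of a conformal field `E`
is scalar if and only if `g(E)` is closed. As `g(E) = g̃(e)` is closed because `e` is parallel,
`Ω² g(E)` is closed if and only if `g(E) ∧ θ = 0`, which is (1) ⇔ (2).

Up to the factor `Ω²`, the tensor `∇(•)` changes by a term symmetric in all four arguments plus
`θ(Y • Z) g̃(X, V) + θ(Y • V) g̃(X, Z) + θ(Z • V) g̃(X, Y)`. If `θ = f g̃(e)`, then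
`θ(Y • Z) = f g̃(Y, Z)` and this sum is totally symmetric as well. Conversely, symmetry in the first
two arguments with one of them equal to `E` already forces `θ(Y • Z) = f g̃(Y, Z)`, and `Y = e`
gives `θ = f g̃(e)`.
-/

section Calculus

open scoped Matrix

variable {U : Set (Pt n)} {t : Pt n} {f f₁ f₂ : Pt n → ℝ} {α X Y : Pt n → Fin n → ℝ}

theorem differentiableAt_of_contDiffOn (hU : IsOpen U) (hf : ContDiffOn ℝ (⊤ : ℕ∞) f U)
    (ht : t ∈ U) : DifferentiableAt ℝ f t :=
  (hf.differentiableOn (by simp)).differentiableAt (hU.mem_nhds ht)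

theorem fderiv_congr_of_isOpen (hU : IsOpen U) (ht : t ∈ U) (h : ∀ s ∈ U, f₁ s = f₂ s) :
    fderiv ℝ f₁ t = fderiv ℝ f₂ t :=
  (Filter.eventuallyEq_of_mem (hU.mem_nhds ht) h).fderiv_eq

theorem pder_congr (hU : IsOpen U) (ht : t ∈ U) (h : ∀ s ∈ U, f₁ s = f₂ s) (i : Fin n) :
    pder i f₁ t = pder i f₂ t := by
  rw [pder, pder, fderiv_congr_of_isOpen hU ht h]

theorem fderiv_eq_sum_pder (f : Pt n → ℝ) (t v : Pt n) :
    fderiv ℝ f t v = ∑ i, v i * pder i f t := by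
  conv_lhs => rw [pi_eq_sum_univ' v, map_sum]
  exact Finset.sum_congr rfl fun i _ => map_smul _ _ _

theorem contDiffOn_pder (hU : IsOpen U) (hf : ContDiffOn ℝ (⊤ : ℕ∞) f U) (i : Fin n) :
    ContDiffOn ℝ (⊤ : ℕ∞) (pder i f) U :=
  (hf.fderiv_of_isOpen hU (by simp)).clm_apply contDiffOn_const

theorem pder_pder_comm (hU : IsOpen U) (hf : ContDiffOn ℝ (⊤ : ℕ∞) f U) (ht : t ∈ U)
    (i j : Fin n) : pder i (pder j f) t = pder j (pder i f) t := by
  have hd : DifferentiableAt ℝ (fderiv ℝ f) t :=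
    ((hf.fderiv_of_isOpen (m := 1) hU (by norm_cast)).differentiableOn
      (by simp)).differentiableAt (hU.mem_nhds ht)
  have pder_pder : ∀ a b : Fin n, pder a (pder b f) t
      = fderiv ℝ (fderiv ℝ f) t (Pi.single a 1) (Pi.single b 1) := by
    intro a b
    unfold pder
    rw [fderiv_clm_apply hd (by fun_prop)]
    simp
  rw [pder_pder, pder_pder]
  refine ((hf.contDiffAt (hU.mem_nhds ht)).isSymmSndFDerivAt ?_) _ _
  simp only [minSmoothness_of_isRCLikeNormedField]
  norm_cast

/-- The Jacobian matrix `∂ᵢXᵏ` (row `k`, column `i`) of a vector field or of a 1-form. -/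
def jac (X : Pt n → Fin n → ℝ) (t : Pt n) : Matrix (Fin n) (Fin n) ℝ :=
  Matrix.of fun k i => pder i (fun s => X s k) t

theorem jac_mulVec (X : Pt n → Fin n → ℝ) (t v : Pt n) :
    jac X t *ᵥ v = fun k => fderiv ℝ (fun s => X s k) t v := by
  funext k
  rw [fderiv_eq_sum_pder]
  exact dotProduct_comm _ _

theorem jac_congr (hU : IsOpen U) (ht : t ∈ U) (h : ∀ s ∈ U, X s = Y s) :
    jac X t = jac Y t := by
  ext k i
  exact pder_congr hU ht (fun s hs => congrFun (h s hs) k) i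

theorem SmoothVF.differentiableAt (hU : IsOpen U) (hX : SmoothVF U X) (ht : t ∈ U)
    (k : Fin n) : DifferentiableAt ℝ (fun s => X s k) t :=
  differentiableAt_of_contDiffOn hU (hX k) ht

theorem smoothVF_const (U : Set (Pt n)) (v : Fin n → ℝ) : SmoothVF U (fun _ => v) :=
  fun _ => contDiffOn_const

theorem SmoothVF.add (hX : SmoothVF U X) (hY : SmoothVF U Y) :
    SmoothVF U (fun s => X s + Y s) :=
  fun k => (hX k).add (hY k)

theorem SmoothVF.sub (hX : SmoothVF U X) (hY : SmoothVF U Y) :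
    SmoothVF U (fun s => X s - Y s) :=
  fun k => (hX k).sub (hY k)

theorem SmoothVF.smul (hf : ContDiffOn ℝ (⊤ : ℕ∞) f U) (hX : SmoothVF U X) :
    SmoothVF U (fun s => f s • X s) :=
  fun k => hf.mul (hX k)

theorem SmoothVF.dotProduct (hα : SmoothVF U α) (hX : SmoothVF U X) :
    ContDiffOn ℝ (⊤ : ℕ∞) (fun s => α s ⬝ᵥ X s) U :=
  ContDiffOn.sum fun k _ => (hα k).mul (hX k)

theorem fderiv_dotProduct (hα : ∀ k, DifferentiableAt ℝ (fun s => α s k) t)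
    (hX : ∀ k, DifferentiableAt ℝ (fun s => X s k) t) (v : Pt n) :
    fderiv ℝ (fun s => α s ⬝ᵥ X s) t v = (jac α t *ᵥ v) ⬝ᵥ X t + α t ⬝ᵥ (jac X t *ᵥ v) := by
  simp only [dotProduct, jac_mulVec]
  rw [fderiv_fun_sum fun k _ => (hα k).fun_mul (hX k), sum_apply,
    ← Finset.sum_add_distrib]
  refine Finset.sum_congr rfl fun k _ => ?_
  rw [fderiv_fun_mul (hα k) (hX k)]
  simp only [add_apply, smul_apply, smul_eq_mul]
  ring

theorem jac_smul_mulVec (hf : DifferentiableAt ℝ f t)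
    (hX : ∀ k, DifferentiableAt ℝ (fun s => X s k) t) (v : Pt n) :
    jac (fun s => f s • X s) t *ᵥ v = fderiv ℝ f t v • X t + f t • (jac X t *ᵥ v) := by
  funext k
  simp only [jac_mulVec, Pi.smul_apply, Pi.add_apply, smul_eq_mul]
  rw [fderiv_fun_mul hf (hX k)]
  simp only [add_apply, smul_apply, smul_eq_mul]
  ring

theorem jac_add (hX : ∀ k, DifferentiableAt ℝ (fun s => X s k) t)
    (hY : ∀ k, DifferentiableAt ℝ (fun s => Y s k) t) :
    jac (fun s => X s + Y s) t = jac X t + jac Y t := by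
  ext k i
  simp only [jac, pder, Matrix.of_apply, Matrix.add_apply, Pi.add_apply]
  rw [fderiv_fun_add (hX k) (hY k), add_apply]

theorem jac_sub (hX : ∀ k, DifferentiableAt ℝ (fun s => X s k) t)
    (hY : ∀ k, DifferentiableAt ℝ (fun s => Y s k) t) :
    jac (fun s => X s - Y s) t = jac X t - jac Y t := by
  ext k i
  simp only [jac, pder, Matrix.of_apply, Matrix.sub_apply, Pi.sub_apply]
  rw [fderiv_fun_sub (hX k) (hY k), sub_apply]

end Calculus

/-! ### Metrics -/

section Metrics

open scoped Matrix

variable {U : Set (Pt n)} {t : Pt n} {G : Met n}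

theorem mdown_apply (G : Met n) (X : VF n) (t : Pt n) : mdown G X t = G t *ᵥ X t := rfl

theorem mup_apply (G : Met n) (α : OneForm n) (t : Pt n) : mup G α t = (G t)⁻¹ *ᵥ α t := rfl

theorem mdown2_apply (G : Met n) (X Y : VF n) (t : Pt n) :
    mdown2 G X Y t = X t ⬝ᵥ (G t *ᵥ Y t) := by
  simp only [mdown2, dotProduct, Matrix.mulVec, Finset.mul_sum]
  exact Finset.sum_congr rfl fun i _ => Finset.sum_congr rfl fun j _ => by ring

theorem IsMetricOn.isSymm (hG : IsMetricOn U G) (ht : t ∈ U) : (G t).IsSymm := (hG.2 t ht).1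

theorem IsMetricOn.isUnit_det (hG : IsMetricOn U G) (ht : t ∈ U) : IsUnit (G t).det :=
  (Matrix.isUnit_iff_isUnit_det _).1 (hG.2 t ht).2

theorem IsMetricOn.isSymm_inv (hG : IsMetricOn U G) (ht : t ∈ U) : (G t)⁻¹.IsSymm := by
  rw [Matrix.IsSymm, Matrix.transpose_nonsing_inv, hG.isSymm ht]

theorem IsMetricOn.mdown_mup (hG : IsMetricOn U G) (ht : t ∈ U) (α : OneForm n) :
    mdown G (mup G α) t = α t := by
  rw [mdown_apply, mup_apply, Matrix.mulVec_mulVec, Matrix.mul_nonsing_inv _ (hG.isUnit_det ht),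
    Matrix.one_mulVec]

theorem IsMetricOn.mup_mdown (hG : IsMetricOn U G) (ht : t ∈ U) (X : VF n) :
    mup G (mdown G X) t = X t := by
  rw [mup_apply, mdown_apply, Matrix.mulVec_mulVec, Matrix.nonsing_inv_mul _ (hG.isUnit_det ht),
    Matrix.one_mulVec]

theorem IsMetricOn.mdown2_eq_dotProduct (hG : IsMetricOn U G) (ht : t ∈ U) (X Y : VF n) :
    mdown2 G X Y t = mdown G X t ⬝ᵥ Y t := by
  rw [mdown2_apply, mdown_apply, Matrix.dotProduct_mulVec, ← Matrix.mulVec_transpose,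
    hG.isSymm ht]

theorem IsMetricOn.mdown2_comm (hG : IsMetricOn U G) (ht : t ∈ U) (X Y : VF n) :
    mdown2 G X Y t = mdown2 G Y X t := by
  rw [hG.mdown2_eq_dotProduct ht, mdown2_apply, dotProduct_comm, mdown_apply]

theorem IsMetricOn.mdown2_mup (hG : IsMetricOn U G) (ht : t ∈ U) (α : OneForm n) (X : VF n) :
    mdown2 G (mup G α) X t = α t ⬝ᵥ X t := by
  rw [hG.mdown2_eq_dotProduct ht, hG.mdown_mup ht]

theorem IsMetricOn.dotProduct_mup_comm (hG : IsMetricOn U G) (ht : t ∈ U) (α β : OneForm n) :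
    α t ⬝ᵥ mup G β t = β t ⬝ᵥ mup G α t := by
  rw [← hG.mdown2_mup ht, hG.mdown2_comm ht, hG.mdown2_mup ht]

theorem contDiffOn_det {M : Pt n → Matrix (Fin n) (Fin n) ℝ} (hM : SmoothMet U M) :
    ContDiffOn ℝ (⊤ : ℕ∞) (fun s => (M s).det) U := by
  simp only [Matrix.det_apply']
  exact ContDiffOn.sum fun σ _ => contDiffOn_const.mul (contDiffOn_prod fun i _ => hM _ _)

theorem IsMetricOn.smoothMet_inv (hG : IsMetricOn U G) : SmoothMet U (fun s => (G s)⁻¹) := by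
  intro i j
  have adjugate : ContDiffOn ℝ (⊤ : ℕ∞) (fun s => (G s).adjugate i j) U := by
    simp only [Matrix.adjugate_apply]
    refine contDiffOn_det fun a b => ?_
    by_cases h : a = j
    · simpa only [h, Matrix.updateRow_self] using contDiffOn_const
    · simpa only [Matrix.updateRow_ne h] using hG.1 a b
  refine (((contDiffOn_det hG.1).inv fun s hs => (hG.isUnit_det hs).ne_zero).mul
    adjugate).congr fun s _ => ?_
  simp [Matrix.inv_def]

theorem SmoothVF.mdown {X : VF n} (hG : SmoothMet U G) (hX : SmoothVF U X) :
    SmoothVF U (mdown G X) :=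
  fun k => ContDiffOn.sum fun j _ => (hG k j).mul (hX j)

theorem SmoothVF.mup {α : OneForm n} (hG : IsMetricOn U G) (hα : SmoothVF U α) :
    SmoothVF U (mup G α) :=
  hα.mdown hG.smoothMet_inv

theorem SmoothVF.mdown2 {X Y : VF n} (hG : SmoothMet U G) (hX : SmoothVF U X)
    (hY : SmoothVF U Y) : ContDiffOn ℝ (⊤ : ℕ∞) (mdown2 G X Y) U :=
  (hX.dotProduct (hY.mdown hG)).congr fun s _ => mdown2_apply G X Y s

end Metrics

/-! ### The Levi-Civita connection -/

section LeviCivita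

open scoped Matrix

variable {U : Set (Pt n)} {t : Pt n} {G : Met n}

theorem IsMetricOn.contDiffOn_chr (hU : IsOpen U) (hG : IsMetricOn U G) (k i j : Fin n) :
    ContDiffOn ℝ (⊤ : ℕ∞) (chr G k i j) U :=
  contDiffOn_const.mul <| ContDiffOn.sum fun l _ => (hG.smoothMet_inv k l).mul
    (((contDiffOn_pder hU (hG.1 j l) i).add (contDiffOn_pder hU (hG.1 i l) j)).sub
      (contDiffOn_pder hU (hG.1 i j) l))

theorem IsMetricOn.pder_comm (hU : IsOpen U) (hG : IsMetricOn U G) (ht : t ∈ U)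
    (i j l : Fin n) : pder l (fun s => G s i j) t = pder l (fun s => G s j i) t :=
  pder_congr hU ht (fun _ hs => ((hG.isSymm hs).apply i j).symm) l

theorem IsMetricOn.chr_comm (hU : IsOpen U) (hG : IsMetricOn U G) (ht : t ∈ U)
    (k i j : Fin n) : chr G k i j t = chr G k j i t := by
  simp only [chr, hG.pder_comm hU ht i j, add_comm]

/-- The connection matrix `(Γ_X)ᵏₘ = Xⁱ Γᵏᵢₘ`, so that `∇_X Y = ∂_X Y + Γ_X Y`. -/
def connMat (G : Met n) (X : VF n) (t : Pt n) : Matrix (Fin n) (Fin n) ℝ :=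
  Matrix.of fun k m => ∑ i, X t i * chr G k i m t

theorem covV_eq (G : Met n) (X Y : VF n) (t : Pt n) :
    covV G X Y t = jac Y t *ᵥ X t + connMat G X t *ᵥ Y t := by
  funext k
  simp only [covV, mul_add, Finset.sum_add_distrib, Pi.add_apply, Matrix.mulVec, dotProduct, jac,
    connMat, Matrix.of_apply, Finset.mul_sum, Finset.sum_mul, mul_assoc]
  rw [Finset.sum_comm]
  congr 1
  exact Finset.sum_congr rfl fun i _ => mul_comm _ _

theorem covF_eq (G : Met n) (X : VF n) (α : OneForm n) (t : Pt n) :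
    covF G X α t = jac α t *ᵥ X t - α t ᵥ* connMat G X t := by
  funext k
  simp only [covF, mul_sub, Finset.sum_sub_distrib, Pi.sub_apply, Matrix.mulVec, Matrix.vecMul,
    dotProduct, jac, connMat, Matrix.of_apply, Finset.mul_sum]
  rw [Finset.sum_comm]
  congr 1
  · exact Finset.sum_congr rfl fun i _ => mul_comm _ _
  · exact Finset.sum_congr rfl fun m _ => Finset.sum_congr rfl fun i _ => by ring

theorem IsMetricOn.connMat_mulVec_comm (hU : IsOpen U) (hG : IsMetricOn U G) (ht : t ∈ U)
    (X Y : VF n) : connMat G X t *ᵥ Y t = connMat G Y t *ᵥ X t := by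
  funext k
  simp only [Matrix.mulVec, dotProduct, connMat, Matrix.of_apply, Finset.sum_mul]
  rw [Finset.sum_comm]
  exact Finset.sum_congr rfl fun i _ => Finset.sum_congr rfl fun m _ => by
    rw [hG.chr_comm hU ht]; ring

theorem IsMetricOn.sum_mul_chr (hG : IsMetricOn U G) (ht : t ∈ U) (l i j : Fin n) :
    ∑ k, G t l k * chr G k i j t = (1 / 2) * (pder i (fun s => G s j l) t
      + pder j (fun s => G s i l) t - pder l (fun s => G s i j) t) := by
  set A : Fin n → ℝ := fun l => pder i (fun s => G s j l) t
      + pder j (fun s => G s i l) t - pder l (fun s => G s i j) t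
  have h : (fun k => chr G k i j t) = (1 / 2 : ℝ) • ((G t)⁻¹ *ᵥ A) := rfl
  change (G t *ᵥ fun k => chr G k i j t) l = 1 / 2 * A l
  rw [h, Matrix.mulVec_smul, Matrix.mulVec_mulVec,
    Matrix.mul_nonsing_inv _ (hG.isUnit_det ht), Matrix.one_mulVec]
  rfl

theorem IsMetricOn.mul_connMat_apply (hG : IsMetricOn U G) (ht : t ∈ U) (X : VF n)
    (l m : Fin n) : (G t * connMat G X t) l m = ∑ i, X t i * ((1 / 2) *
      (pder i (fun s => G s m l) t + pder m (fun s => G s i l) t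
        - pder l (fun s => G s i m) t)) := by
  simp only [Matrix.mul_apply, connMat, Matrix.of_apply, ← hG.sum_mul_chr ht, Finset.mul_sum]
  rw [Finset.sum_comm]
  exact Finset.sum_congr rfl fun i _ => Finset.sum_congr rfl fun k _ => by ring

theorem IsMetricOn.fderiv_eq_connMat (hU : IsOpen U) (hG : IsMetricOn U G) (ht : t ∈ U)
    (X : VF n) : (Matrix.of fun l m => fderiv ℝ (fun s => G s l m) t (X t))
      = (G t * connMat G X t)ᵀ + G t * connMat G X t := by
  ext l m
  rw [Matrix.add_apply, Matrix.transpose_apply, hG.mul_connMat_apply ht,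
    hG.mul_connMat_apply ht, ← Finset.sum_add_distrib, Matrix.of_apply, fderiv_eq_sum_pder]
  refine Finset.sum_congr rfl fun i _ => ?_
  rw [hG.pder_comm hU ht m l i]
  ring

theorem SmoothVF.covV {X Y : VF n} (hU : IsOpen U) (hG : IsMetricOn U G) (hX : SmoothVF U X)
    (hY : SmoothVF U Y) : SmoothVF U (covV G X Y) :=
  fun k => ContDiffOn.sum fun i _ => (hX i).mul <| (contDiffOn_pder hU (hY k) i).add <|
    ContDiffOn.sum fun m _ => (hG.contDiffOn_chr hU k i m).mul (hY m)

theorem covV_congr {Y Y' : VF n} (hU : IsOpen U) (ht : t ∈ U) (h : ∀ s ∈ U, Y s = Y' s)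
    (G : Met n) (X : VF n) : covV G X Y t = covV G X Y' t := by
  rw [covV_eq, covV_eq, h t ht, jac_congr hU ht h]

theorem covF_congr {α β : OneForm n} (hU : IsOpen U) (ht : t ∈ U) (h : ∀ s ∈ U, α s = β s)
    (G : Met n) (X : VF n) : covF G X α t = covF G X β t := by
  rw [covF_eq, covF_eq, h t ht, jac_congr hU ht h]

theorem covV_add {Y Y' : VF n} (hU : IsOpen U) (ht : t ∈ U) (hY : SmoothVF U Y)
    (hY' : SmoothVF U Y') (G : Met n) (X : VF n) :
    covV G X (fun s => Y s + Y' s) t = covV G X Y t + covV G X Y' t := by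
  rw [covV_eq, covV_eq, covV_eq,
    jac_add (hY.differentiableAt hU ht) (hY'.differentiableAt hU ht), Matrix.add_mulVec,
    Matrix.mulVec_add, add_add_add_comm]

theorem covV_sub {Y Y' : VF n} (hU : IsOpen U) (ht : t ∈ U) (hY : SmoothVF U Y)
    (hY' : SmoothVF U Y') (G : Met n) (X : VF n) :
    covV G X (fun s => Y s - Y' s) t = covV G X Y t - covV G X Y' t := by
  rw [covV_eq, covV_eq, covV_eq,
    jac_sub (hY.differentiableAt hU ht) (hY'.differentiableAt hU ht), Matrix.sub_mulVec,
    Matrix.mulVec_sub, add_sub_add_comm]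

theorem covV_smul {f : Pt n → ℝ} {Y : VF n} (hU : IsOpen U) (ht : t ∈ U)
    (hf : ContDiffOn ℝ (⊤ : ℕ∞) f U) (hY : SmoothVF U Y) (G : Met n) (X : VF n) :
    covV G X (fun s => f s • Y s) t = fderiv ℝ f t (X t) • Y t + f t • covV G X Y t := by
  rw [covV_eq, covV_eq, jac_smul_mulVec (differentiableAt_of_contDiffOn hU hf ht)
    (hY.differentiableAt hU ht), Matrix.mulVec_smul, smul_add, add_assoc]

theorem IsMetricOn.vbr_eq (hU : IsOpen U) (hG : IsMetricOn U G) (ht : t ∈ U) (X Y : VF n) :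
    vbr X Y t = covV G X Y t - covV G Y X t := by
  rw [covV_eq, covV_eq, hG.connMat_mulVec_comm hU ht Y X, add_sub_add_right_eq_sub]
  funext k
  simp only [vbr, Finset.sum_sub_distrib, Pi.sub_apply, jac_mulVec, fderiv_eq_sum_pder]

theorem fderiv_dotProduct_eq_cov {α : OneForm n} {Y : VF n} (hU : IsOpen U) (ht : t ∈ U)
    (hα : SmoothVF U α) (hY : SmoothVF U Y) (G : Met n) (X : VF n) :
    fderiv ℝ (fun s => α s ⬝ᵥ Y s) t (X t) = covF G X α t ⬝ᵥ Y t + α t ⬝ᵥ covV G X Y t := by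
  rw [fderiv_dotProduct (hα.differentiableAt hU ht) (hY.differentiableAt hU ht), covF_eq, covV_eq,
    sub_dotProduct, dotProduct_add, ← Matrix.dotProduct_mulVec]
  ring

theorem IsMetricOn.covF_mdown (hU : IsOpen U) (hG : IsMetricOn U G) (ht : t ∈ U) (X : VF n)
    {Y : VF n} (hY : SmoothVF U Y) : covF G X (mdown G Y) t = mdown G (covV G X Y) t := by
  have jac_mdown : jac (mdown G Y) t *ᵥ X t
      = (Matrix.of fun l m => fderiv ℝ (fun s => G s l m) t (X t)) *ᵥ Y t
        + G t *ᵥ (jac Y t *ᵥ X t) := by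
    funext k
    rw [jac_mulVec]
    refine (fderiv_dotProduct (α := fun s => G s k)
      (fun j => differentiableAt_of_contDiffOn hU (hG.1 k j) ht)
      (hY.differentiableAt hU ht) (X t)).trans ?_
    rw [jac_mulVec]
    rfl
  rw [covF_eq, jac_mdown, hG.fderiv_eq_connMat hU ht, mdown_apply, mdown_apply, covV_eq,
    Matrix.mulVec_add, ← Matrix.mulVec_transpose, Matrix.transpose_mul, (hG.isSymm ht).eq,
    Matrix.add_mulVec, Matrix.mulVec_mulVec, Matrix.mulVec_mulVec, Matrix.mulVec_mulVec]
  abel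

theorem IsMetricOn.covV_mup (hU : IsOpen U) (hG : IsMetricOn U G) (ht : t ∈ U) (X : VF n)
    {α : OneForm n} (hα : SmoothVF U α) : covV G X (mup G α) t = mup G (covF G X α) t := by
  rw [← hG.mup_mdown ht (covV G X (mup G α)), mup_apply, mup_apply,
    ← hG.covF_mdown hU ht X (hα.mup hG), covF_congr hU ht fun s hs => hG.mdown_mup hs α]

theorem IsMetricOn.fderiv_mdown2 (hU : IsOpen U) (hG : IsMetricOn U G) (ht : t ∈ U) (X : VF n)
    {Y Z : VF n} (hY : SmoothVF U Y) (hZ : SmoothVF U Z) :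
    fderiv ℝ (mdown2 G Y Z) t (X t)
      = mdown2 G (covV G X Y) Z t + mdown2 G Y (covV G X Z) t := by
  rw [fderiv_congr_of_isOpen hU ht fun s hs => hG.mdown2_eq_dotProduct hs Y Z,
    fderiv_dotProduct_eq_cov hU ht (hY.mdown hG.1) hZ G, hG.covF_mdown hU ht X hY,
    hG.mdown2_eq_dotProduct ht, hG.mdown2_eq_dotProduct ht]

end LeviCivita

/-! ### Closed 1-forms and the covariant derivative of a vector field -/

section Closed

open scoped Matrix

theorem isSymm_iff_mulVec_dotProduct {ι R : Type*} [Fintype ι] [CommSemiring R]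
    {M : Matrix ι ι R} : M.IsSymm ↔ ∀ v w, (M *ᵥ v) ⬝ᵥ w = (M *ᵥ w) ⬝ᵥ v := by
  classical
  constructor
  · intro hM v w
    rw [dotProduct_comm, Matrix.dotProduct_mulVec, ← Matrix.mulVec_transpose, hM.eq]
  · intro h
    ext i j
    simpa using h (Pi.single i 1) (Pi.single j 1)

variable {U : Set (Pt n)} {t : Pt n} {G : Met n} {α : OneForm n} {E : VF n}

/-- The 1-form `α` is closed on `U`, i.e. `∂ᵢαₖ = ∂ₖαᵢ`. -/
def IsClosedOn (U : Set (Pt n)) (α : OneForm n) : Prop := ∀ t ∈ U, (jac α t).IsSymm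

theorem IsClosedOn.congr {β : OneForm n} (hU : IsOpen U) (h : ∀ t ∈ U, α t = β t)
    (hα : IsClosedOn U α) : IsClosedOn U β := fun t ht => by
  rw [← jac_congr hU ht h]
  exact hα t ht

theorem IsMetricOn.covF_dotProduct_sub (hU : IsOpen U) (hG : IsMetricOn U G) (ht : t ∈ U)
    (α : OneForm n) (X Y : VF n) :
    covF G X α t ⬝ᵥ Y t - covF G Y α t ⬝ᵥ X t
      = (jac α t *ᵥ X t) ⬝ᵥ Y t - (jac α t *ᵥ Y t) ⬝ᵥ X t := by
  rw [covF_eq, covF_eq, sub_dotProduct, sub_dotProduct, ← Matrix.dotProduct_mulVec,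
    ← Matrix.dotProduct_mulVec, hG.connMat_mulVec_comm hU ht X Y]
  ring

theorem IsClosedOn.covF_dotProduct_comm (hα : IsClosedOn U α) (hU : IsOpen U)
    (hG : IsMetricOn U G) (ht : t ∈ U) (X Y : VF n) :
    covF G X α t ⬝ᵥ Y t = covF G Y α t ⬝ᵥ X t := by
  rw [← sub_eq_zero, hG.covF_dotProduct_sub hU ht,
    isSymm_iff_mulVec_dotProduct.1 (hα t ht) (X t) (Y t), sub_self]

/-- The matrix of the endomorphism `X ↦ ∇_X E` of the tangent space. -/
def covMat (G : Met n) (E : VF n) (t : Pt n) : Matrix (Fin n) (Fin n) ℝ :=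
  jac E t + connMat G E t

theorem IsMetricOn.covV_eq_covMat_mulVec (hU : IsOpen U) (hG : IsMetricOn U G) (ht : t ∈ U)
    (X E : VF n) : covV G X E t = covMat G E t *ᵥ X t := by
  rw [covV_eq, covMat, Matrix.add_mulVec, hG.connMat_mulVec_comm hU ht]

theorem lieMet_eq_jac (E : VF n) (G : Met n) (t : Pt n) :
    lieMet E G t = (Matrix.of fun l m => fderiv ℝ (fun s => G s l m) t (E t))
      + (jac E t)ᵀ * G t + G t * jac E t := by
  ext l m
  simp only [lieMet, jac, Matrix.of_apply, Matrix.add_apply, Matrix.mul_apply,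
    Matrix.transpose_apply, fderiv_eq_sum_pder, mul_comm (pder l _ t)]

theorem IsMetricOn.lieMet_eq (hU : IsOpen U) (hG : IsMetricOn U G) (ht : t ∈ U) (E : VF n) :
    lieMet E G t = (G t * covMat G E t)ᵀ + G t * covMat G E t := by
  rw [lieMet_eq_jac, hG.fderiv_eq_connMat hU ht, covMat, Matrix.mul_add, Matrix.transpose_add,
    Matrix.transpose_mul (G t) (jac E t), (hG.isSymm ht).eq]
  abel

theorem IsMetricOn.isClosedOn_mdown_iff (hU : IsOpen U) (hG : IsMetricOn U G)
    (hE : SmoothVF U E) :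
    IsClosedOn U (mdown G E) ↔ ∀ t ∈ U, (G t * covMat G E t).IsSymm := by
  refine forall₂_congr fun t ht => ?_
  simp only [isSymm_iff_mulVec_dotProduct]
  refine forall₂_congr fun v w => ?_
  have h := hG.covF_dotProduct_sub hU ht (mdown G E) (fun _ => v) (fun _ => w)
  simp only [hG.covF_mdown hU ht _ hE, mdown_apply, hG.covV_eq_covMat_mulVec hU ht,
    Matrix.mulVec_mulVec] at h
  rw [← sub_eq_zero, ← h, sub_eq_zero]

theorem IsMetricOn.covV_eq_smul_iff_mul_covMat (hU : IsOpen U) (hG : IsMetricOn U G)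
    (E : VF n) (r : Pt n → ℝ) :
    (∀ X : VF n, SmoothVF U X → ∀ t ∈ U, ∀ a, covV G X E t a = r t * X t a)
      ↔ ∀ t ∈ U, G t * covMat G E t = r t • G t := by
  constructor
  · intro h t ht
    have covMat_eq : covMat G E t = r t • 1 := Matrix.ext_of_mulVec_single fun i => by
      rw [Matrix.smul_mulVec, Matrix.one_mulVec]
      exact (hG.covV_eq_covMat_mulVec hU ht (fun _ => Pi.single i 1) E).symm.trans
        (funext (h _ (smoothVF_const U _) t ht))
    rw [covMat_eq, Matrix.mul_smul, Matrix.mul_one]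
  · intro h X _ t ht a
    rw [hG.covV_eq_covMat_mulVec hU ht,
      ← Matrix.nonsing_inv_mul_cancel_left (G t) (covMat G E t) (hG.isUnit_det ht), h t ht,
      Matrix.mul_smul, Matrix.nonsing_inv_mul _ (hG.isUnit_det ht), Matrix.smul_mulVec,
      Matrix.one_mulVec, Pi.smul_apply, smul_eq_mul]

theorem IsMetricOn.covV_eq_smul_iff (hU : IsOpen U) (hG : IsMetricOn U G) (hE : SmoothVF U E)
    (r : Pt n → ℝ) :
    (∀ X : VF n, SmoothVF U X → ∀ t ∈ U, ∀ a, covV G X E t a = (r t / 2) * X t a)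
      ↔ (∀ t ∈ U, ∀ i j, lieMet E G t i j = r t * G t i j) ∧ IsClosedOn U (mdown G E) := by
  rw [hG.covV_eq_smul_iff_mul_covMat hU, hG.isClosedOn_mdown_iff hU hE, ← forall₂_and]
  refine forall₂_congr fun t ht => ?_
  rw [hG.lieMet_eq hU ht]
  constructor
  · intro h
    rw [h, Matrix.IsSymm, Matrix.transpose_smul, hG.isSymm ht]
    refine ⟨fun i j => ?_, rfl⟩
    simp only [Matrix.add_apply, Matrix.smul_apply, smul_eq_mul]
    ring
  · rintro ⟨lie, symm⟩
    ext i j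
    have lie_ij := lie i j
    rw [symm.eq, Matrix.add_apply] at lie_ij
    rw [Matrix.smul_apply, smul_eq_mul]
    linarith

end Closed

section LogDerivative

open scoped Matrix

variable {U : Set (Pt n)} {t : Pt n} {Ω f : Pt n → ℝ} {α : OneForm n}

/-- The 1-form `dΩ / Ω`, as the differential of `log |Ω|` (`Real.log` is even). -/
def dlog (Ω : Pt n → ℝ) : OneForm n := fun t i => pder i (fun s => Real.log (Ω s)) t

theorem smoothVF_dlog (hU : IsOpen U) (hΩ : ContDiffOn ℝ (⊤ : ℕ∞) Ω U)
    (hΩ0 : ∀ t ∈ U, Ω t ≠ 0) : SmoothVF U (dlog Ω) :=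
  contDiffOn_pder hU (hΩ.log hΩ0)

theorem isClosedOn_dlog (hU : IsOpen U) (hΩ : ContDiffOn ℝ (⊤ : ℕ∞) Ω U)
    (hΩ0 : ∀ t ∈ U, Ω t ≠ 0) : IsClosedOn U (dlog Ω) := fun _ ht =>
  Matrix.IsSymm.ext fun i j => pder_pder_comm hU (hΩ.log hΩ0) ht i j

theorem pder_eq_mul_dlog (hΩ : DifferentiableAt ℝ Ω t) (hΩ0 : Ω t ≠ 0) (i : Fin n) :
    pder i Ω t = Ω t * dlog Ω t i := by
  rw [dlog, pder, pder, fderiv.log hΩ hΩ0, smul_apply, smul_eq_mul, mul_inv_cancel_left₀ hΩ0]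

theorem mul_pder_eq_mul_pder_iff (hΩ : DifferentiableAt ℝ Ω t) (hΩ0 : Ω t ≠ 0) {i m : Fin n}
    {x y : ℝ} : x * pder m Ω t = y * pder i Ω t ↔ x * dlog Ω t m = y * dlog Ω t i := by
  rw [pder_eq_mul_dlog hΩ hΩ0, pder_eq_mul_dlog hΩ hΩ0, mul_left_comm, mul_left_comm _ (Ω t),
    mul_right_inj' hΩ0]

theorem pder_sq_mul (hΩ : DifferentiableAt ℝ Ω t) (hΩ0 : Ω t ≠ 0) (hf : DifferentiableAt ℝ f t)
    (i : Fin n) :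
    pder i (fun s => Ω s ^ 2 * f s) t = Ω t ^ 2 * (pder i f t + 2 * dlog Ω t i * f t) := by
  have h := pder_eq_mul_dlog hΩ hΩ0 i
  simp only [pder] at h ⊢
  rw [fderiv_fun_mul (hΩ.fun_pow 2) hf, fderiv_fun_pow 2 hΩ]
  simp only [add_apply, smul_apply, smul_eq_mul, h]
  ring

theorem IsClosedOn.sq_smul_iff (hU : IsOpen U) (hα : SmoothVF U α) (hcl : IsClosedOn U α)
    (hΩ : ContDiffOn ℝ (⊤ : ℕ∞) Ω U) (hΩ0 : ∀ t ∈ U, Ω t ≠ 0) :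
    IsClosedOn U (fun t => Ω t ^ 2 • α t)
      ↔ ∀ t ∈ U, ∀ i m, α t i * dlog Ω t m = α t m * dlog Ω t i := by
  refine forall₂_congr fun t ht => ?_
  have jac_sq (k i) : jac (fun t => Ω t ^ 2 • α t) t k i
      = Ω t ^ 2 * (jac α t k i + 2 * dlog Ω t i * α t k) :=
    pder_sq_mul (differentiableAt_of_contDiffOn hU hΩ ht) (hΩ0 t ht)
      (hα.differentiableAt hU ht k) i
  rw [Matrix.IsSymm.ext_iff]
  refine forall₂_congr fun i m => ?_
  rw [jac_sq, jac_sq, mul_right_inj' (pow_ne_zero 2 (hΩ0 t ht)), (hcl t ht).apply]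
  constructor <;> intro h <;> linarith

end LogDerivative

/-! ### Conformal change of a metric -/

section Conformal

open scoped Matrix

variable {U : Set (Pt n)} {t : Pt n} {Ω : Pt n → ℝ} {G H : Met n}

/-- `H = Ω² G` on the open set `U`, with `G` a metric and `Ω` smooth and nowhere zero. -/
structure IsConformalOn (U : Set (Pt n)) (Ω : Pt n → ℝ) (G H : Met n) : Prop where
  isOpen : IsOpen U
  met : IsMetricOn U G
  smooth : ContDiffOn ℝ (⊤ : ℕ∞) Ω U
  ne_zero : ∀ t ∈ U, Ω t ≠ 0
  eq : ∀ t ∈ U, H t = Ω t ^ 2 • G t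

/-- The difference `∇^H_X Y − ∇^G_X Y` for `H = Ω² G`. -/
def conformalDiff (G : Met n) (Ω : Pt n → ℝ) (X Y : VF n) : VF n := fun t =>
  (dlog Ω t ⬝ᵥ X t) • Y t + (dlog Ω t ⬝ᵥ Y t) • X t - mdown2 G X Y t • mup G (dlog Ω) t

/-- The Schouten-type endomorphism `P_X = ∇_X θ^♯ − θ(X) θ^♯ + ½ θ(θ^♯) X`, `θ = dΩ / Ω`, which
governs the change of the curvature under `G ↦ Ω² G`. -/
def conformalSchouten (G : Met n) (Ω : Pt n → ℝ) (X : VF n) : VF n := fun t =>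
  mup G (covF G X (dlog Ω)) t - (dlog Ω t ⬝ᵥ X t) • mup G (dlog Ω) t
    + (1 / 2 * (dlog Ω t ⬝ᵥ mup G (dlog Ω) t)) • X t

namespace IsConformalOn

theorem sq_ne_zero (h : IsConformalOn U Ω G H) (ht : t ∈ U) : Ω t ^ 2 ≠ 0 :=
  pow_ne_zero 2 (h.ne_zero t ht)

theorem inv_eq (h : IsConformalOn U Ω G H) (ht : t ∈ U) : (H t)⁻¹ = (Ω t ^ 2)⁻¹ • (G t)⁻¹ := by
  refine Matrix.inv_eq_right_inv ?_
  rw [h.eq t ht, Matrix.smul_mul, Matrix.mul_smul, smul_smul, mul_inv_cancel₀ (h.sq_ne_zero ht),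
    one_smul, Matrix.mul_nonsing_inv _ (h.met.isUnit_det ht)]

theorem isMetricOn (h : IsConformalOn U Ω G H) : IsMetricOn U H := by
  refine ⟨fun i j => ((h.smooth.pow 2).mul (h.met.1 i j)).congr fun t ht => ?_, fun t ht => ?_⟩
  · rw [h.eq t ht, Matrix.smul_apply, smul_eq_mul]
  · rw [h.eq t ht]
    refine ⟨(h.met.isSymm ht).smul _, ?_⟩
    exact (h.met.2 t ht).2.smul (Units.mk0 _ (h.sq_ne_zero ht))

theorem mdown_eq (h : IsConformalOn U Ω G H) (ht : t ∈ U) (X : VF n) :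
    mdown H X t = Ω t ^ 2 • mdown G X t := by
  rw [mdown_apply, mdown_apply, h.eq t ht, Matrix.smul_mulVec]

theorem mup_eq (h : IsConformalOn U Ω G H) (ht : t ∈ U) (α : OneForm n) :
    mup H α t = (Ω t ^ 2)⁻¹ • mup G α t := by
  rw [mup_apply, mup_apply, h.inv_eq ht, Matrix.smul_mulVec]

theorem mdown2_eq (h : IsConformalOn U Ω G H) (ht : t ∈ U) (X Y : VF n) :
    mdown2 H X Y t = Ω t ^ 2 * mdown2 G X Y t := by
  rw [mdown2_apply, mdown2_apply, h.eq t ht, Matrix.smul_mulVec, dotProduct_smul, smul_eq_mul]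

theorem smoothVF_dlog (h : IsConformalOn U Ω G H) : SmoothVF U (dlog Ω) :=
  _root_.smoothVF_dlog h.isOpen h.smooth h.ne_zero

theorem isClosedOn_dlog (h : IsConformalOn U Ω G H) : IsClosedOn U (dlog Ω) :=
  _root_.isClosedOn_dlog h.isOpen h.smooth h.ne_zero

theorem pder_eq (h : IsConformalOn U Ω G H) (ht : t ∈ U) (l i j : Fin n) :
    pder l (fun s => H s i j) t
      = Ω t ^ 2 * (pder l (fun s => G s i j) t + 2 * dlog Ω t l * G t i j) := by
  rw [pder_congr h.isOpen ht fun s hs => by rw [h.eq s hs, Matrix.smul_apply, smul_eq_mul]]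
  exact pder_sq_mul (differentiableAt_of_contDiffOn h.isOpen h.smooth ht) (h.ne_zero t ht)
    (differentiableAt_of_contDiffOn h.isOpen (h.met.1 i j) ht) l

theorem connMat_eq (h : IsConformalOn U Ω G H) (ht : t ∈ U) (X : VF n) :
    connMat H X t = connMat G X t + (dlog Ω t ⬝ᵥ X t) • 1 + Matrix.vecMulVec (X t) (dlog Ω t)
      - Matrix.vecMulVec (mup G (dlog Ω) t) (mdown G X t) := by
  have lowered : G t * connMat H X t = G t * connMat G X t + (dlog Ω t ⬝ᵥ X t) • G t
      + Matrix.vecMulVec (mdown G X t) (dlog Ω t)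
      - Matrix.vecMulVec (dlog Ω t) (mdown G X t) := by
    ext l m
    refine mul_left_cancel₀ (h.sq_ne_zero ht) ?_
    have hH := h.isMetricOn.mul_connMat_apply ht X l m
    rw [h.eq t ht, Matrix.smul_mul, Matrix.smul_apply, smul_eq_mul] at hH
    rw [hH]
    simp only [Matrix.add_apply, Matrix.sub_apply, Matrix.smul_apply, Matrix.vecMulVec_apply,
      smul_eq_mul, h.met.mul_connMat_apply ht, h.pder_eq ht, dotProduct, mdown, Finset.sum_mul,
      Finset.mul_sum, ← Finset.sum_add_distrib, ← Finset.sum_sub_distrib]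
    refine Finset.sum_congr rfl fun i _ => ?_
    rw [(h.met.isSymm ht).apply l m, (h.met.isSymm ht).apply l i, (h.met.isSymm ht).apply m i]
    ring
  rw [← Matrix.nonsing_inv_mul_cancel_left (G t) (connMat H X t) (h.met.isUnit_det ht), lowered,
    Matrix.mul_sub, Matrix.mul_add, Matrix.mul_add, Matrix.mul_vecMulVec, Matrix.mul_vecMulVec,
    Matrix.mul_smul, Matrix.nonsing_inv_mul_cancel_left (G t) _ (h.met.isUnit_det ht),
    Matrix.nonsing_inv_mul _ (h.met.isUnit_det ht), ← mup_apply, ← mup_apply, h.met.mup_mdown ht]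

theorem covV_eq (h : IsConformalOn U Ω G H) (ht : t ∈ U) (X Y : VF n) :
    covV H X Y t = covV G X Y t + conformalDiff G Ω X Y t := by
  rw [_root_.covV_eq, _root_.covV_eq, h.connMat_eq ht, conformalDiff,
    h.met.mdown2_eq_dotProduct ht, Matrix.sub_mulVec, Matrix.add_mulVec, Matrix.add_mulVec,
    Matrix.vecMulVec_mulVec, Matrix.vecMulVec_mulVec, Matrix.smul_mulVec, Matrix.one_mulVec,
    op_smul_eq_smul, op_smul_eq_smul]
  abel

theorem covF_eq (h : IsConformalOn U Ω G H) (ht : t ∈ U) (X : VF n) (α : OneForm n) :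
    covF H X α t = covF G X α t - (dlog Ω t ⬝ᵥ X t) • α t - (α t ⬝ᵥ X t) • dlog Ω t
      + (α t ⬝ᵥ mup G (dlog Ω) t) • mdown G X t := by
  rw [_root_.covF_eq, _root_.covF_eq, h.connMat_eq ht, Matrix.vecMul_sub, Matrix.vecMul_add,
    Matrix.vecMul_add, Matrix.vecMul_vecMulVec, Matrix.vecMul_vecMulVec, Matrix.vecMul_smul,
    Matrix.vecMul_one]
  abel

theorem mup_covF_eq (h : IsConformalOn U Ω G H) (ht : t ∈ U) (X : VF n) (α : OneForm n) :
    mup H (covF H X α) t = (Ω t ^ 2)⁻¹ • (mup G (covF G X α) t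
      - (dlog Ω t ⬝ᵥ X t) • mup G α t - (α t ⬝ᵥ X t) • mup G (dlog Ω) t
      + (α t ⬝ᵥ mup G (dlog Ω) t) • X t) := by
  rw [h.mup_eq ht, mup_apply, h.covF_eq ht, Matrix.mulVec_add, Matrix.mulVec_sub,
    Matrix.mulVec_sub, Matrix.mulVec_smul, Matrix.mulVec_smul, Matrix.mulVec_smul, ← mup_apply,
    ← mup_apply, ← mup_apply, ← mup_apply, h.met.mup_mdown ht]

theorem smoothVF_conformalDiff (h : IsConformalOn U Ω G H) {X Y : VF n} (hX : SmoothVF U X)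
    (hY : SmoothVF U Y) : SmoothVF U (conformalDiff G Ω X Y) :=
  ((hY.smul (h.smoothVF_dlog.dotProduct hX)).add (hX.smul (h.smoothVF_dlog.dotProduct hY))).sub
    ((h.smoothVF_dlog.mup h.met).smul (hX.mdown2 h.met.1 hY))

theorem covV_conformalDiff (h : IsConformalOn U Ω G H) (ht : t ∈ U) (X : VF n) {Y Z : VF n}
    (hY : SmoothVF U Y) (hZ : SmoothVF U Z) :
    covV G X (conformalDiff G Ω Y Z) t
      = conformalDiff G Ω (covV G X Y) Z t + conformalDiff G Ω Y (covV G X Z) t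
        + (covF G X (dlog Ω) t ⬝ᵥ Y t) • Z t + (covF G X (dlog Ω) t ⬝ᵥ Z t) • Y t
        - mdown2 G Y Z t • mup G (covF G X (dlog Ω)) t := by
  have hθ := h.smoothVF_dlog
  have hθY := hθ.dotProduct hY
  have hθZ := hθ.dotProduct hZ
  have hYZ := hY.mdown2 h.met.1 hZ
  have hU := h.isOpen
  change covV G X (fun s => ((dlog Ω s ⬝ᵥ Y s) • Z s + (dlog Ω s ⬝ᵥ Z s) • Y s)
    - mdown2 G Y Z s • mup G (dlog Ω) s) t = _
  rw [covV_sub hU ht ((hZ.smul hθY).add (hY.smul hθZ)) ((hθ.mup h.met).smul hYZ),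
    covV_add hU ht (hZ.smul hθY) (hY.smul hθZ), covV_smul hU ht hθY hZ, covV_smul hU ht hθZ hY,
    covV_smul hU ht hYZ (hθ.mup h.met), h.met.covV_mup hU ht X hθ,
    fderiv_dotProduct_eq_cov hU ht hθ hY G, fderiv_dotProduct_eq_cov hU ht hθ hZ G,
    h.met.fderiv_mdown2 hU ht X hY hZ]
  simp only [conformalDiff]
  module

theorem curvV_eq_conformalDiff (h : IsConformalOn U Ω G H) (ht : t ∈ U) {X Y Z : VF n}
    (hX : SmoothVF U X) (hY : SmoothVF U Y) (hZ : SmoothVF U Z) :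
    curvV H X Y Z t = curvV G X Y Z t
      + (covV G X (conformalDiff G Ω Y Z) t - conformalDiff G Ω (covV G X Y) Z t
          - conformalDiff G Ω Y (covV G X Z) t)
      - (covV G Y (conformalDiff G Ω X Z) t - conformalDiff G Ω (covV G Y X) Z t
          - conformalDiff G Ω X (covV G Y Z) t)
      + (conformalDiff G Ω X (conformalDiff G Ω Y Z) t
        - conformalDiff G Ω Y (conformalDiff G Ω X Z) t) := by
  have conformalDiff_add (V W W' : VF n) : conformalDiff G Ω V (fun s => W s + W' s) t
      = conformalDiff G Ω V W t + conformalDiff G Ω V W' t := by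
    simp only [conformalDiff, mdown2_apply, Matrix.mulVec_add, dotProduct_add]
    module
  have conformalDiff_vbr : conformalDiff G Ω (vbr X Y) Z t
      = conformalDiff G Ω (covV G X Y) Z t - conformalDiff G Ω (covV G Y X) Z t := by
    simp only [conformalDiff, mdown2_apply, h.met.vbr_eq h.isOpen ht, sub_dotProduct,
      dotProduct_sub]
    module
  have covV_covV (V W : VF n) (hW : SmoothVF U W) : covV H V (covV H W Z) t
      = covV G V (covV G W Z) t + covV G V (conformalDiff G Ω W Z) t
        + (conformalDiff G Ω V (covV G W Z) t
          + conformalDiff G Ω V (conformalDiff G Ω W Z) t) := by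
    rw [covV_congr h.isOpen ht (fun s hs => h.covV_eq hs W Z) H V, h.covV_eq ht,
      covV_add h.isOpen ht (hW.covV h.isOpen h.met hZ) (h.smoothVF_conformalDiff hW hZ),
      conformalDiff_add]
  change covV H X (covV H Y Z) t - covV H Y (covV H X Z) t - covV H (vbr X Y) Z t
    = covV G X (covV G Y Z) t - covV G Y (covV G X Z) t - covV G (vbr X Y) Z t + _ - _ + _
  rw [covV_covV X Y hY, covV_covV Y X hX, h.covV_eq ht (vbr X Y), conformalDiff_vbr]
  abel

theorem conformalDiff_conformalDiff_sub (h : IsConformalOn U Ω G H) (ht : t ∈ U)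
    (X Y Z : VF n) :
    conformalDiff G Ω X (conformalDiff G Ω Y Z) t - conformalDiff G Ω Y (conformalDiff G Ω X Z) t
      = ((dlog Ω t ⬝ᵥ Y t) * (dlog Ω t ⬝ᵥ Z t)
          - (dlog Ω t ⬝ᵥ mup G (dlog Ω) t) * mdown2 G Y Z t) • X t
        - ((dlog Ω t ⬝ᵥ X t) * (dlog Ω t ⬝ᵥ Z t)
          - (dlog Ω t ⬝ᵥ mup G (dlog Ω) t) * mdown2 G X Z t) • Y t
        + ((dlog Ω t ⬝ᵥ X t) * mdown2 G Y Z t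
          - (dlog Ω t ⬝ᵥ Y t) * mdown2 G X Z t) • mup G (dlog Ω) t := by
  have mdown_mup (V : VF n) : mdown G V t ⬝ᵥ mup G (dlog Ω) t = dlog Ω t ⬝ᵥ V t := by
    rw [h.met.dotProduct_mup_comm ht, h.met.mup_mdown ht]
  have mdown_comm : mdown G Y t ⬝ᵥ X t = mdown G X t ⬝ᵥ Y t := by
    rw [← h.met.mdown2_eq_dotProduct ht, ← h.met.mdown2_eq_dotProduct ht, h.met.mdown2_comm ht]
  simp only [conformalDiff, h.met.mdown2_eq_dotProduct ht, dotProduct_sub, dotProduct_add,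
    dotProduct_smul, smul_eq_mul, mdown_mup, mdown_comm]
  module

theorem curvV_eq (h : IsConformalOn U Ω G H) (ht : t ∈ U) {X Y Z : VF n}
    (hX : SmoothVF U X) (hY : SmoothVF U Y) (hZ : SmoothVF U Z) :
    curvV H X Y Z t = curvV G X Y Z t
      + mdown2 G (conformalSchouten G Ω X) Z t • Y t
      - mdown2 G (conformalSchouten G Ω Y) Z t • X t
      + mdown2 G X Z t • conformalSchouten G Ω Y t
      - mdown2 G Y Z t • conformalSchouten G Ω X t := by
  have mdown2_schouten (V : VF n) : mdown2 G (conformalSchouten G Ω V) Z t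
      = covF G V (dlog Ω) t ⬝ᵥ Z t - (dlog Ω t ⬝ᵥ V t) * (dlog Ω t ⬝ᵥ Z t)
        + 1 / 2 * (dlog Ω t ⬝ᵥ mup G (dlog Ω) t) * mdown2 G V Z t := by
    rw [← h.met.mdown2_mup ht (covF G V (dlog Ω)), ← h.met.mdown2_mup ht (dlog Ω) Z]
    simp only [mdown2_apply, conformalSchouten, add_dotProduct, sub_dotProduct, smul_dotProduct,
      smul_eq_mul]
  rw [h.curvV_eq_conformalDiff ht hX hY hZ, h.covV_conformalDiff ht X hY hZ,
    h.covV_conformalDiff ht Y hX hZ, h.conformalDiff_conformalDiff_sub ht, mdown2_schouten,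
    mdown2_schouten, h.isClosedOn_dlog.covF_dotProduct_comm h.isOpen h.met ht Y X,
    conformalSchouten, conformalSchouten]
  module

theorem curvF_eq (h : IsConformalOn U Ω G H) (ht : t ∈ U) {X Y : VF n} (hX : SmoothVF U X)
    (hY : SmoothVF U Y) (α : OneForm n) :
    curvF H X Y α t = curvF G X Y α t
      - ((α t ⬝ᵥ Y t) • mdown G (conformalSchouten G Ω X) t
        - (α t ⬝ᵥ X t) • mdown G (conformalSchouten G Ω Y) t
        + (α t ⬝ᵥ conformalSchouten G Ω Y t) • mdown G X t
        - (α t ⬝ᵥ conformalSchouten G Ω X t) • mdown G Y t) := by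
  funext k
  change -(α t ⬝ᵥ curvV H X Y (fun _ => Pi.single k 1) t)
    = -(α t ⬝ᵥ curvV G X Y (fun _ => Pi.single k 1) t) - _
  rw [h.curvV_eq ht hX hY (smoothVF_const U _)]
  simp only [h.met.mdown2_eq_dotProduct ht, dotProduct_single_one, dotProduct_sub, dotProduct_add,
    dotProduct_smul, smul_eq_mul, Pi.sub_apply, Pi.add_apply, Pi.smul_apply]
  ring

theorem mup_curvF_eq (h : IsConformalOn U Ω G H) (ht : t ∈ U) {X Y : VF n} (hX : SmoothVF U X)
    (hY : SmoothVF U Y) (α : OneForm n) :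
    mup H (curvF H X Y α) t = (Ω t ^ 2)⁻¹ • (mup G (curvF G X Y α) t
      - ((α t ⬝ᵥ Y t) • conformalSchouten G Ω X t - (α t ⬝ᵥ X t) • conformalSchouten G Ω Y t
        + (α t ⬝ᵥ conformalSchouten G Ω Y t) • X t
        - (α t ⬝ᵥ conformalSchouten G Ω X t) • Y t)) := by
  rw [h.mup_eq ht, mup_apply, h.curvF_eq ht hX hY]
  simp only [Matrix.mulVec_add, Matrix.mulVec_sub, Matrix.mulVec_smul, ← mup_apply,
    h.met.mup_mdown ht]

theorem lieMet_eq (h : IsConformalOn U Ω G H) (ht : t ∈ U) (E : VF n) :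
    lieMet E H t = Ω t ^ 2 • (lieMet E G t + (2 * (dlog Ω t ⬝ᵥ E t)) • G t) := by
  have fderiv_eq : (Matrix.of fun l m => fderiv ℝ (fun s => H s l m) t (E t))
      = Ω t ^ 2 • ((Matrix.of fun l m => fderiv ℝ (fun s => G s l m) t (E t))
        + (2 * (dlog Ω t ⬝ᵥ E t)) • G t) := by
    ext l m
    simp only [Matrix.of_apply, Matrix.smul_apply, Matrix.add_apply, smul_eq_mul,
      fderiv_eq_sum_pder, h.pder_eq ht, dotProduct, Finset.mul_sum, Finset.sum_mul,
      ← Finset.sum_add_distrib]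
    exact Finset.sum_congr rfl fun i _ => by ring
  rw [lieMet_eq_jac, lieMet_eq_jac, fderiv_eq, h.eq t ht, Matrix.mul_smul, Matrix.smul_mul]
  module

end IsConformalOn

end Conformal

/-! ### Pencils of metrics -/

section Pencil

open scoped Matrix

variable {U : Set (Pt n)} {t : Pt n} {Ω : Pt n → ℝ} {G G' H H' : Met n} {lam : ℝ}

theorem IsMetricOn.inv (hG : IsMetricOn U G) : IsMetricOn U (fun s => (G s)⁻¹) :=
  ⟨hG.smoothMet_inv, fun t ht => ⟨hG.isSymm_inv ht, Matrix.isUnit_nonsing_inv_iff.2 (hG.2 t ht).2⟩⟩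

theorem IsMetricOn.pencil (hG : IsMetricOn U G) (hG' : IsMetricOn U G')
    (hlam : ∀ t ∈ U, IsUnit ((G t)⁻¹ + lam • (G' t)⁻¹)) : IsMetricOn U (pencil G G' lam) :=
  IsMetricOn.inv (G := fun s => (G s)⁻¹ + lam • (G' s)⁻¹)
    ⟨fun i j => (hG.smoothMet_inv i j).add (contDiffOn_const.mul (hG'.smoothMet_inv i j)),
      fun t ht => ⟨(hG.isSymm_inv ht).add ((hG'.isSymm_inv ht).smul lam), hlam t ht⟩⟩

theorem mup_pencil (hlam : IsUnit ((G t)⁻¹ + lam • (G' t)⁻¹)) (α : OneForm n) :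
    mup (pencil G G' lam) α t = mup G α t + lam • mup G' α t := by
  rw [mup_apply, pencil, Matrix.nonsing_inv_nonsing_inv _ ((Matrix.isUnit_iff_isUnit_det _).1 hlam),
    Matrix.add_mulVec, Matrix.smul_mulVec, ← mup_apply, ← mup_apply]

namespace IsConformalOn

theorem inv_add_smul_inv (h : IsConformalOn U Ω G H) (h' : IsConformalOn U Ω G' H') (ht : t ∈ U)
    (lam : ℝ) :
    (H t)⁻¹ + lam • (H' t)⁻¹ = (Ω t ^ 2)⁻¹ • ((G t)⁻¹ + lam • (G' t)⁻¹) := by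
  rw [h.inv_eq ht, h'.inv_eq ht, smul_add, smul_comm lam]

theorem isUnit_inv_add_smul_inv (h : IsConformalOn U Ω G H) (h' : IsConformalOn U Ω G' H')
    (ht : t ∈ U) (hlam : IsUnit ((H t)⁻¹ + lam • (H' t)⁻¹)) :
    IsUnit ((G t)⁻¹ + lam • (G' t)⁻¹) := by
  rw [h.inv_add_smul_inv h' ht] at hlam
  simpa only [Units.smul_mk0, smul_inv_smul₀ (h.sq_ne_zero ht)] using
    hlam.smul (Units.mk0 _ (h.sq_ne_zero ht))

theorem pencil (h : IsConformalOn U Ω G H) (h' : IsConformalOn U Ω G' H')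
    (hlam : ∀ t ∈ U, IsUnit ((G t)⁻¹ + lam • (G' t)⁻¹)) :
    IsConformalOn U Ω (pencil G G' lam) (pencil H H' lam) where
  isOpen := h.isOpen
  met := h.met.pencil h'.met hlam
  smooth := h.smooth
  ne_zero := h.ne_zero
  eq t ht := by
    refine Matrix.inv_eq_right_inv ?_
    rw [h.inv_add_smul_inv h' ht, Matrix.smul_mul, Matrix.mul_smul, _root_.pencil,
      Matrix.mul_nonsing_inv _ ((Matrix.isUnit_iff_isUnit_det _).1 (hlam t ht)),
      inv_smul_smul₀ (h.sq_ne_zero ht)]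

end IsConformalOn

theorem conformalSchouten_pencil (hlam : IsUnit ((G t)⁻¹ + lam • (G' t)⁻¹)) {X : VF n}
    (hcov : mup (pencil G G' lam) (covF (pencil G G' lam) X (dlog Ω)) t
      = mup G (covF G X (dlog Ω)) t + lam • mup G' (covF G' X (dlog Ω)) t) :
    conformalSchouten (pencil G G' lam) Ω X t
      = conformalSchouten G Ω X t + lam • conformalSchouten G' Ω X t := by
  simp only [conformalSchouten, hcov, mup_pencil hlam, dotProduct_add, dotProduct_smul,
    smul_eq_mul]
  module

theorem AlmostCompatible.mup_covF (hc : AlmostCompatible U G G')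
    (hlam : ∀ t ∈ U, IsUnit ((G t)⁻¹ + lam • (G' t)⁻¹)) (ht : t ∈ U) {X : VF n}
    (hX : SmoothVF U X) {α : OneForm n} (hα : SmoothVF U α) :
    mup (pencil G G' lam) (covF (pencil G G' lam) X α) t
      = mup G (covF G X α) t + lam • mup G' (covF G' X α) t :=
  funext (hc lam hlam X hX α hα t ht)

theorem AlmostCompatible.conformal (hc : AlmostCompatible U G G') (h : IsConformalOn U Ω G H)
    (h' : IsConformalOn U Ω G' H') : AlmostCompatible U H H' := by
  intro lam hlamH X hX α hα t ht
  have hlam : ∀ t ∈ U, IsUnit ((G t)⁻¹ + lam • (G' t)⁻¹) := fun t ht =>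
    h.isUnit_inv_add_smul_inv h' ht (hlamH t ht)
  refine congrFun (g := mup H (covF H X α) t + lam • mup H' (covF H' X α) t) ?_
  rw [(h.pencil h' hlam).mup_covF_eq ht, h.mup_covF_eq ht, h'.mup_covF_eq ht,
    hc.mup_covF hlam ht hX hα, mup_pencil (hlam t ht), mup_pencil (hlam t ht), dotProduct_add,
    dotProduct_smul, smul_eq_mul]
  module

theorem Compatible.conformal (hc : Compatible U G G') (h : IsConformalOn U Ω G H)
    (h' : IsConformalOn U Ω G' H') : Compatible U H H' := by
  refine ⟨hc.1.conformal h h', ?_⟩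
  intro lam hlamH X Y hX hY α hα t ht
  have hlam : ∀ t ∈ U, IsUnit ((G t)⁻¹ + lam • (G' t)⁻¹) := fun t ht =>
    h.isUnit_inv_add_smul_inv h' ht (hlamH t ht)
  have schouten {V : VF n} (hV : SmoothVF U V) :=
    conformalSchouten_pencil (hlam t ht) (hc.1.mup_covF hlam ht hV h.smoothVF_dlog)
  have curv : mup (pencil G G' lam) (curvF (pencil G G' lam) X Y α) t
      = mup G (curvF G X Y α) t + lam • mup G' (curvF G' X Y α) t :=
    funext (hc.2 lam hlam X Y hX hY α hα t ht)
  refine congrFun (g := mup H (curvF H X Y α) t + lam • mup H' (curvF H' X Y α) t) ?_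
  rw [(h.pencil h' hlam).mup_curvF_eq ht hX hY, h.mup_curvF_eq ht hX hY,
    h'.mup_curvF_eq ht hX hY, curv, schouten hX, schouten hY, dotProduct_add, dotProduct_add,
    dotProduct_smul, dotProduct_smul, smul_eq_mul, smul_eq_mul]
  module

end Pencil

section QuasiHomogeneous

open scoped Matrix

variable {U : Set (Pt n)} {Ω D Dt : Pt n → ℝ} {g g' h h' : Met n} {E : VF n}

theorem IsWQH.isClosedOn_mdown (hU : IsOpen U) (hP : IsWQH U g g' E D Dt) :
    IsClosedOn U (mdown g E) :=
  ((hP.met_h.covV_eq_smul_iff hU hP.smooth_E D).1 hP.cov_E).2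

theorem IsConformalOn.lieMet_eq_smul (hc : IsConformalOn U Ω g h)
    (lie : ∀ t ∈ U, ∀ i j, lieMet E g t i j = D t * g t i j) :
    ∀ t ∈ U, ∀ i j, lieMet E h t i j = (D t + 2 * (dlog Ω t ⬝ᵥ E t)) * h t i j := by
  intro t ht i j
  rw [hc.lieMet_eq ht, hc.eq t ht]
  simp only [Matrix.smul_apply, Matrix.add_apply, smul_eq_mul, lie t ht i j]
  ring

theorem IsConformalOn.isClosedOn_mdown_iff (hc : IsConformalOn U Ω g h) (hE : SmoothVF U E)
    (hcl : IsClosedOn U (mdown g E)) : IsClosedOn U (mdown h E)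
      ↔ ∀ t ∈ U, ∀ i m, mdown g E t i * dlog Ω t m = mdown g E t m * dlog Ω t i := by
  rw [← hcl.sq_smul_iff hc.isOpen (hE.mdown hc.met.1) hc.smooth hc.ne_zero]
  exact ⟨.congr hc.isOpen fun t ht => hc.mdown_eq ht E,
    .congr hc.isOpen fun t ht => (hc.mdown_eq ht E).symm⟩

theorem IsWQH.conformal (hP : IsWQH U g g' E D Dt) (hc : IsConformalOn U Ω g h)
    (hc' : IsConformalOn U Ω g' h') (hcl : IsClosedOn U (mdown h E)) :
    IsWQH U h h' E (fun t => D t + 2 * (dlog Ω t ⬝ᵥ E t))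
      (fun t => Dt t + 2 * (dlog Ω t ⬝ᵥ E t)) where
  met_h := hc.isMetricOn
  met_h' := hc'.isMetricOn
  compat := hP.compat.conformal hc hc'
  smooth_E := hP.smooth_E
  smooth_D := hP.smooth_D.add (contDiffOn_const.mul (hc.smoothVF_dlog.dotProduct hP.smooth_E))
  smooth_Dt := hP.smooth_Dt.add (contDiffOn_const.mul (hc.smoothVF_dlog.dotProduct hP.smooth_E))
  lie_h' := hc'.lieMet_eq_smul hP.lie_h'
  cov_E := (hc.isMetricOn.covV_eq_smul_iff hc.isOpen hP.smooth_E _).2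
    ⟨hc.lieMet_eq_smul ((hc.met.covV_eq_smul_iff hc.isOpen hP.smooth_E D).1 hP.cov_E).1, hcl⟩
  diff_const := by simpa only [add_sub_add_right_eq_sub] using hP.diff_const

end QuasiHomogeneous

section BilinearForms

variable {S K : Type*} [Field K]

-- With `f := A ε v₀ / G ε v₀`, the form `B := A - f G` satisfies the same relation and
-- `B ε v₀ = 0`; specializing to `ε` and `v₀` then kills `B`.
theorem exists_eq_mul_of_sym_relation [NeZero (2 : K)] {A G : S → S → K}
    (hA : ∀ y z, A y z = A z y) (hG : ∀ y z, G y z = G z y) {ε v₀ : S} (hv₀ : G ε v₀ ≠ 0)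
    (hrel : ∀ y z v, A y z * G ε v + A y v * G ε z = A ε z * G y v + A ε v * G y z) :
    ∃ f : K, ∀ y z, A y z = f * G y z := by
  refine ⟨A ε v₀ / G ε v₀, ?_⟩
  set f := A ε v₀ / G ε v₀ with hf
  suffices ∀ y z, A y z - f * G y z = 0 from fun y z => sub_eq_zero.1 (this y z)
  set B : S → S → K := fun y z => A y z - f * G y z with hB
  have B_comm (y z) : B y z = B z y := by simp only [hB, hA y z, hG y z]
  have B_rel (y z v) : B y z * G ε v + B y v * G ε z = B ε z * G y v + B ε v * G y z := by
    simp only [hB]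
    linear_combination hrel y z v
  have B_v₀ : B ε v₀ = 0 := by simp only [hB, hf, div_mul_cancel₀ _ hv₀, sub_self]
  have B_right (y) : B y v₀ = 0 := by
    have h := B_rel y v₀ v₀
    rw [B_v₀, zero_mul, add_zero, ← two_mul] at h
    simpa [hv₀, two_ne_zero] using h
  have B_ε_ε : B ε ε = 0 := by
    have h := B_rel v₀ ε ε
    rw [B_comm v₀ ε, B_v₀, hG v₀ ε] at h
    simp only [zero_mul, ← two_mul] at h
    simpa [hv₀, two_ne_zero] using h.symm
  have B_mul (y z) : B y z * G ε v₀ = B ε z * G y v₀ := by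
    have h := B_rel y z v₀
    rwa [B_right, B_v₀, zero_mul, zero_mul, add_zero, add_zero] at h
  have B_ε (y) : B ε y = 0 := by
    have h := B_mul y ε
    rw [B_ε_ε, zero_mul, B_comm] at h
    exact (mul_eq_zero.1 h).resolve_right hv₀
  intro y z
  have h := B_mul y z
  rw [B_ε, zero_mul] at h
  exact (mul_eq_zero.1 h).resolve_right hv₀

theorem exists_eq_smul_of_mul_comm {a b : S → K} (ha : a ≠ 0)
    (hab : ∀ i m, a i * b m = a m * b i) : ∃ f : K, b = f • a := by
  obtain ⟨i, hi⟩ := Function.ne_iff.1 ha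
  refine ⟨b i / a i, funext fun m => ?_⟩
  rw [Pi.smul_apply, smul_eq_mul, div_mul_eq_mul_div, eq_div_iff hi]
  linear_combination hab i m

end BilinearForms

/-! ### Invariant multiplications under a conformal change -/

section Multiplication

open scoped Matrix

variable {U : Set (Pt n)} {t : Pt n} {Ω : Pt n → ℝ} {c : Mul2 n} {G H : Met n}

/-- The matrix of the multiplication `Y ↦ X • Y` by a vector field. -/
def mulMat (c : Mul2 n) (X : VF n) (t : Pt n) : Matrix (Fin n) (Fin n) ℝ :=
  Matrix.of fun k j => ∑ i, c t k i j * X t i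

theorem mapp_eq_mulMat_mulVec (c : Mul2 n) (X Y : VF n) (t : Pt n) :
    mapp c X Y t = mulMat c X t *ᵥ Y t := by
  funext k
  simp only [mapp, mulMat, Matrix.mulVec, dotProduct, Matrix.of_apply, Finset.sum_mul]
  exact Finset.sum_comm

/-- The multiplication `c` is commutative and invariant with respect to the metric `G`, i.e.
`G(X • Y, Z) = G(X, Y • Z)`; both conditions are expressed in components. -/
structure IsInvariantMul (U : Set (Pt n)) (c : Mul2 n) (G : Met n) : Prop where
  comm : ∀ t ∈ U, ∀ a i j, c t a i j = c t a j i
  invar : ∀ t ∈ U, ∀ x y z, (∑ m, G t m z * c t m x y) = ∑ m, G t x m * c t m y z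

namespace IsInvariantMul

theorem mapp_comm (hc : IsInvariantMul U c G) (ht : t ∈ U) (X Y : VF n) :
    mapp c X Y t = mapp c Y X t := by
  funext k
  simp only [mapp]
  rw [Finset.sum_comm]
  exact Finset.sum_congr rfl fun i _ => Finset.sum_congr rfl fun j _ => by
    rw [hc.comm t ht k j i]; ring

theorem mulMat_transpose_mul (hc : IsInvariantMul U c G) (ht : t ∈ U) (Y : VF n) :
    (mulMat c Y t)ᵀ * G t = G t * mulMat c Y t := by
  ext x z
  simp only [Matrix.mul_apply, Matrix.transpose_apply, mulMat, Matrix.of_apply, Finset.sum_mul,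
    Finset.mul_sum]
  rw [Finset.sum_comm, Finset.sum_comm (f := fun m y => G t x m * (c t m y z * Y t y))]
  refine Finset.sum_congr rfl fun y _ => ?_
  simp only [hc.comm t ht _ y x, mul_comm _ (G t _ z), ← mul_assoc, ← Finset.sum_mul,
    hc.invar t ht]

theorem mdown2_mapp (hc : IsInvariantMul U c G) (ht : t ∈ U) (X Y Z : VF n) :
    mdown2 G (mapp c X Y) Z t = mdown2 G X (mapp c Y Z) t := by
  rw [mdown2_apply, mdown2_apply, hc.mapp_comm ht X Y, mapp_eq_mulMat_mulVec,
    mapp_eq_mulMat_mulVec, dotProduct_comm, Matrix.dotProduct_mulVec, ← Matrix.mulVec_transpose,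
    Matrix.mulVec_mulVec, hc.mulMat_transpose_mul ht, ← Matrix.mulVec_mulVec, dotProduct_comm]

theorem mdown2_mapp_right_comm (hc : IsInvariantMul U c G) (ht : t ∈ U) (X Y Z : VF n) :
    mdown2 G X (mapp c Y Z) t = mdown2 G X (mapp c Z Y) t := by
  rw [mdown2_apply, mdown2_apply, hc.mapp_comm ht]

theorem mdown2_mapp_left_comm (hc : IsInvariantMul U c G) (ht : t ∈ U) (X Y Z : VF n) :
    mdown2 G X (mapp c Y Z) t = mdown2 G Y (mapp c X Z) t := by
  rw [← hc.mdown2_mapp ht, ← hc.mdown2_mapp ht, mdown2_apply, mdown2_apply, hc.mapp_comm ht]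

end IsInvariantMul

namespace IsConformalOn

theorem covMul_eq (h : IsConformalOn U Ω G H) (hc : IsInvariantMul U c G) (ht : t ∈ U)
    (X Y Z : VF n) :
    covMul H c X Y Z t = covMul G c X Y Z t + (conformalDiff G Ω X (mapp c Y Z) t
      - mapp c (conformalDiff G Ω X Y) Z t - mapp c Y (conformalDiff G Ω X Z) t) := by
  change covV H X (mapp c Y Z) t - mapp c (covV H X Y) Z t - mapp c Y (covV H X Z) t
    = covV G X (mapp c Y Z) t - mapp c (covV G X Y) Z t - mapp c Y (covV G X Z) t + _
  simp only [hc.mapp_comm ht _ Z, mapp_eq_mulMat_mulVec c Y, mapp_eq_mulMat_mulVec c Z,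
    h.covV_eq ht, Matrix.mulVec_add]
  abel

theorem mdown2_conformalDiff (h : IsConformalOn U Ω G H) (ht : t ∈ U) (X Y V : VF n) :
    mdown2 G (conformalDiff G Ω X Y) V t = (dlog Ω t ⬝ᵥ X t) * mdown2 G Y V t
      + (dlog Ω t ⬝ᵥ Y t) * mdown2 G X V t - mdown2 G X Y t * (dlog Ω t ⬝ᵥ V t) := by
  rw [← h.met.mdown2_mup ht (dlog Ω) V]
  simp only [mdown2_apply, conformalDiff, sub_dotProduct, add_dotProduct, smul_dotProduct,
    smul_eq_mul]

theorem covMul4_eq (h : IsConformalOn U Ω G H) (hc : IsInvariantMul U c G) (ht : t ∈ U)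
    (X Y Z V : VF n) :
    covMul4 H c X Y Z V t = Ω t ^ 2 * (covMul4 G c X Y Z V t
      - ((dlog Ω t ⬝ᵥ X t) * mdown2 G Y (mapp c Z V) t
        + (dlog Ω t ⬝ᵥ Y t) * mdown2 G X (mapp c Z V) t
        + (dlog Ω t ⬝ᵥ Z t) * mdown2 G X (mapp c Y V) t
        + (dlog Ω t ⬝ᵥ V t) * mdown2 G X (mapp c Y Z) t)
      + ((dlog Ω t ⬝ᵥ mapp c Y Z t) * mdown2 G X V t
        + (dlog Ω t ⬝ᵥ mapp c Y V t) * mdown2 G X Z t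
        + (dlog Ω t ⬝ᵥ mapp c Z V t) * mdown2 G X Y t)) := by
  have expand : covMul4 H c X Y Z V t = Ω t ^ 2 * (covMul4 G c X Y Z V t
      + (mdown2 G (conformalDiff G Ω X (mapp c Y Z)) V t
        - mdown2 G (mapp c (conformalDiff G Ω X Y) Z) V t
        - mdown2 G (mapp c (conformalDiff G Ω X Z) Y) V t)) := by
    rw [covMul4, h.mdown2_eq ht, mdown2_apply, h.covMul_eq hc ht, hc.mapp_comm ht Y]
    simp only [covMul4, mdown2_apply, add_dotProduct, sub_dotProduct]
  rw [expand, hc.mdown2_mapp ht _ Z, hc.mdown2_mapp ht _ Y, h.mdown2_conformalDiff ht,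
    h.mdown2_conformalDiff ht, h.mdown2_conformalDiff ht, hc.mdown2_mapp ht Y Z V,
    hc.mdown2_mapp_left_comm ht Z Y V]
  ring

end IsConformalOn

theorem TotSym.conformal (hS : TotSym U G c) (h : IsConformalOn U Ω G H)
    (hc : IsInvariantMul U c G)
    (hA : ∀ t ∈ U, ∃ f : ℝ, ∀ X Y, dlog Ω t ⬝ᵥ mapp c X Y t = f * mdown2 G X Y t) :
    TotSym U H c := by
  intro X Y Z V hX hY hZ hV t ht
  obtain ⟨f, hf⟩ := hA t ht
  obtain ⟨symXY, symYZ, symZV⟩ := hS X Y Z V hX hY hZ hV t ht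
  simp only [h.covMul4_eq hc ht, hf]
  refine ⟨?_, ?_, ?_⟩
  · rw [symXY, hc.mdown2_mapp_left_comm ht Y X V, hc.mdown2_mapp_left_comm ht Y X Z,
      h.met.mdown2_comm ht Y X]
    ring
  · rw [symYZ, hc.mdown2_mapp_left_comm ht Z Y V, hc.mdown2_mapp_right_comm ht X Z Y,
      h.met.mdown2_comm ht Z Y]
    ring
  · rw [symZV, hc.mdown2_mapp_right_comm ht Y V Z, hc.mdown2_mapp_right_comm ht X V Z,
      h.met.mdown2_comm ht V Z]
    ring

theorem IsConformalOn.dlog_mapp_relation (h : IsConformalOn U Ω G H) (hc : IsInvariantMul U c G)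
    (ht : t ∈ U) {E Y Z V : VF n} (symG : covMul4 G c E Y Z V t = covMul4 G c Y E Z V t)
    (symH : covMul4 H c E Y Z V t = covMul4 H c Y E Z V t) :
    (dlog Ω t ⬝ᵥ mapp c Y Z t) * mdown2 G E V t + (dlog Ω t ⬝ᵥ mapp c Y V t) * mdown2 G E Z t
      = (dlog Ω t ⬝ᵥ mapp c E Z t) * mdown2 G Y V t
        + (dlog Ω t ⬝ᵥ mapp c E V t) * mdown2 G Y Z t := by
  rw [h.covMul4_eq hc ht, h.covMul4_eq hc ht, symG, hc.mdown2_mapp_left_comm ht Y E,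
    hc.mdown2_mapp_left_comm ht Y E, h.met.mdown2_comm ht Y E] at symH
  linear_combination mul_left_cancel₀ (h.sq_ne_zero ht) symH

theorem IsConformalOn.exists_dlog_mapp_eq (h : IsConformalOn U Ω G H)
    (hc : IsInvariantMul U c G) (ht : t ∈ U) {E : VF n} (hE : E t ≠ 0)
    (symG : ∀ Y Z V : VF n, SmoothVF U Y → SmoothVF U Z → SmoothVF U V →
      covMul4 G c E Y Z V t = covMul4 G c Y E Z V t)
    (symH : ∀ Y Z V : VF n, SmoothVF U Y → SmoothVF U Z → SmoothVF U V →
      covMul4 H c E Y Z V t = covMul4 H c Y E Z V t) :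
    ∃ f : ℝ, ∀ X Y, dlog Ω t ⬝ᵥ mapp c X Y t = f * mdown2 G X Y t := by
  let const (v : Fin n → ℝ) : VF n := fun _ => v
  obtain ⟨i, hi⟩ : ∃ i, mdown G E t i ≠ 0 := Function.ne_iff.1 fun h0 => hE <| by
    rw [← h.met.mup_mdown ht E, mup_apply, h0]
    exact Matrix.mulVec_zero _
  suffices ∃ f : ℝ, ∀ v w, dlog Ω t ⬝ᵥ mapp c (const v) (const w) t
      = f * mdown2 G (const v) (const w) t from
    this.imp fun f hf X Y => hf (X t) (Y t)
  refine exists_eq_mul_of_sym_relation (ε := E t) (v₀ := Pi.single i 1)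
    (fun v w => by rw [hc.mapp_comm ht]) (fun v w => h.met.mdown2_comm ht _ _) ?_ fun y z v => ?_
  · rw [h.met.mdown2_eq_dotProduct ht, dotProduct_single_one]
    exact hi
  · have smooth (w : Fin n → ℝ) : SmoothVF U (const w) := smoothVF_const U w
    have relation := h.dlog_mapp_relation hc ht (symG _ _ _ (smooth y) (smooth z) (smooth v))
      (symH _ _ _ (smooth y) (smooth z) (smooth v))
    exact relation

end Multiplication

/-! ### Conformal changes of F-manifolds and Frobenius manifolds -/

section Frobenius

open scoped Matrix

variable {U : Set (Pt n)} {t : Pt n} {Ω : Pt n → ℝ} {c : Mul2 n} {g g' h' : Met n}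
  {E e Einv : VF n}

namespace IsWeakF

variable {Dt k : Pt n → ℝ}

theorem isInvariantMul (hF : IsWeakF U c g' E e Einv Dt k) : IsInvariantMul U c g' :=
  ⟨hF.comm, hF.invar⟩

theorem mapp_unit (hF : IsWeakF U c g' E e Einv Dt k) (ht : t ∈ U) (X : VF n) :
    mapp c e X t = X t := by
  have mulMat_unit : mulMat c e t = 1 := by
    ext a i
    rw [Matrix.one_apply, ← hF.unit t ht]
    rfl
  rw [mapp_eq_mulMat_mulVec, mulMat_unit, Matrix.one_mulVec]

theorem exists_dlog_mapp_iff (hF : IsWeakF U c g' E e Einv Dt k) (ht : t ∈ U) :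
    (∃ f : ℝ, ∀ X Y, dlog Ω t ⬝ᵥ mapp c X Y t = f * mdown2 g' X Y t)
      ↔ ∀ i m, mdown g' e t i * dlog Ω t m = mdown g' e t m * dlog Ω t i := by
  constructor
  · rintro ⟨f, hf⟩ i m
    have dlog_eq (j) : dlog Ω t j = f * mdown g' e t j := by
      simpa only [hF.mapp_unit ht, hF.met.mdown2_eq_dotProduct ht, dotProduct_single_one]
        using hf e fun _ => Pi.single j 1
    rw [dlog_eq, dlog_eq]
    ring
  · intro wedge
    by_cases hz : mdown g' e t = 0
    · have e_eq : e t = 0 := by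
        rw [← hF.met.mup_mdown ht e, mup_apply, hz, Matrix.mulVec_zero]
      have eq_zero (X : VF n) : X t = 0 := by
        rw [← hF.mapp_unit ht X, hF.isInvariantMul.mapp_comm ht, mapp_eq_mulMat_mulVec, e_eq,
          Matrix.mulVec_zero]
      exact ⟨0, fun X Y => by rw [eq_zero (mapp c X Y), dotProduct_zero, zero_mul]⟩
    · obtain ⟨f, hf⟩ := exists_eq_smul_of_mul_comm hz wedge
      refine ⟨f, fun X Y => ?_⟩
      rw [hf, smul_dotProduct, smul_eq_mul, ← hF.met.mdown2_eq_dotProduct ht,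
        ← hF.isInvariantMul.mdown2_mapp ht, mdown2_apply, mdown2_apply, hF.mapp_unit ht]

theorem conformal (hF : IsWeakF U c g' E e Einv Dt k) (h : IsConformalOn U Ω g' h')
    (hS : TotSym U h' c) :
    IsWeakF U c h' E e Einv (fun t => Dt t + 2 * (dlog Ω t ⬝ᵥ E t)) k where
  met := h.isMetricOn
  smooth_c := hF.smooth_c
  smooth_E := hF.smooth_E
  smooth_e := hF.smooth_e
  smooth_Einv := hF.smooth_Einv
  smooth_Dt := hF.smooth_Dt.add (contDiffOn_const.mul (h.smoothVF_dlog.dotProduct hF.smooth_E))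
  smooth_k := hF.smooth_k
  comm := hF.comm
  assoc := hF.assoc
  unit := hF.unit
  invar t ht x y z := by
    simp only [h.eq t ht, Matrix.smul_apply, smul_eq_mul, mul_assoc, ← Finset.mul_sum,
      hF.invar t ht]
  lie_g := h.lieMet_eq_smul hF.lie_g
  lie_c := hF.lie_c
  e_inv := hF.e_inv
  sym_E Y Z V hY hZ hV t ht := (hS E Y Z V hF.smooth_E hY hZ hV t ht).1

theorem wedge_of_conformal (hF : IsWeakF U c g' E e Einv Dt k) (h : IsConformalOn U Ω g' h')
    (hgE : ∀ t ∈ U, mdown g E t = mdown g' e t)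
    {e₀ Einv₀ : VF n} {Dt₀ k₀ : Pt n → ℝ} (hF' : IsWeakF U c h' E e₀ Einv₀ Dt₀ k₀) (ht : t ∈ U)
    (i m : Fin n) : mdown g E t i * dlog Ω t m = mdown g E t m * dlog Ω t i := by
  by_cases hE : E t = 0
  · rw [mdown_apply, hE, Matrix.mulVec_zero, Pi.zero_apply, Pi.zero_apply, zero_mul, zero_mul]
  · rw [hgE t ht]
    exact (hF.exists_dlog_mapp_iff ht).1 (h.exists_dlog_mapp_eq hF.isInvariantMul ht hE
      (fun Y Z V hY hZ hV => hF.sym_E Y Z V hY hZ hV t ht)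
      (fun Y Z V hY hZ hV => hF'.sym_E Y Z V hY hZ hV t ht)) i m

end IsWeakF

variable {D k d : ℝ}

theorem IsIntersection.mapp_eq (hI : IsIntersection U c g g' E d) (ht : t ∈ U) (X : VF n) :
    mapp c E X t = mup g (mdown g' X) t := by
  have mulMat_eq : mulMat c E t = (g t)⁻¹ * g' t := by
    ext a j
    rw [Matrix.mul_apply, hI.defn t ht]
    rfl
  rw [mapp_eq_mulMat_mulVec, mulMat_eq, mup_apply, mdown_apply, Matrix.mulVec_mulVec]

theorem IsFrob.isWeakF (hF : IsFrob U c g' E e D k) (hI : IsIntersection U c g g' E d) :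
    IsWeakF U c g' E e (mup g' (mdown g e)) (fun _ => D) (fun _ => k) where
  met := hF.met
  smooth_c := hF.smooth_c
  smooth_E := hF.smooth_E
  smooth_e := hF.smooth_e
  smooth_Einv := (hF.smooth_e.mdown hI.met.1).mup hF.met
  smooth_Dt := contDiffOn_const
  smooth_k := contDiffOn_const
  comm := hF.comm
  assoc := hF.assoc
  unit := hF.unit
  invar := hF.invar
  lie_g := hF.lie_g
  lie_c := hF.lie_c
  e_inv t ht := congrFun <| by
    change mapp c E (mup g' (mdown g e)) t = e t
    rw [hI.mapp_eq ht, mup_apply, hF.met.mdown_mup ht, ← mup_apply, hI.met.mup_mdown ht]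
  sym_E Y Z V hY hZ hV t ht := (hF.tot_sym E Y Z V hF.smooth_E hY hZ hV t ht).1

theorem IsFrob.mdown_eq_mdown_unit (hF : IsFrob U c g' E e D k)
    (hI : IsIntersection U c g g' E d) (ht : t ∈ U) : mdown g E t = mdown g' e t := by
  have E_eq : E t = mup g (mdown g' e) t := by
    rw [← hI.mapp_eq ht, (hF.isWeakF hI).isInvariantMul.mapp_comm ht, (hF.isWeakF hI).mapp_unit ht]
  rw [mdown_apply, E_eq, ← mdown_apply, hI.met.mdown_mup ht]

theorem IsFrob.isClosedOn_mdown_unit (hU : IsOpen U) (hF : IsFrob U c g' E e D k) :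
    IsClosedOn U (mdown g' e) :=
  ((hF.met.covV_eq_smul_iff hU hF.smooth_e 0).1 fun X hX t ht a => by
    rw [hF.e_par X hX t ht, Pi.zero_apply, zero_div, zero_mul]).2

theorem IsFrob.isWQH (hU : IsOpen U) (hF : IsFrob U c g' E e D k)
    (hI : IsIntersection U c g g' E d) :
    IsWQH U g g' E (fun _ => 1 - d) (fun _ => D) where
  met_h := hI.met
  met_h' := hF.met
  compat := hI.compat
  smooth_E := hF.smooth_E
  smooth_D := contDiffOn_const
  smooth_Dt := contDiffOn_const
  lie_h' := hF.lie_g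
  cov_E := (hI.met.covV_eq_smul_iff hU hF.smooth_E _).2 ⟨hI.lie_g,
    (hF.isClosedOn_mdown_unit hU).congr hU fun _ ht => (hF.mdown_eq_mdown_unit hI ht).symm⟩
  diff_const := ⟨D - (1 - d), fun _ _ => rfl⟩

end Frobenius

theorem stmt9_general {U : Set (Pt n)} (hU : IsOpen U) {c : Mul2 n} {g g' : Met n}
    {E e Einv : VF n} {D Dt k Ω : Pt n → ℝ} (hF : IsWeakF U c g' E e Einv Dt k)
    (hS : TotSym U g' c) (hP : IsWQH U g g' E D Dt)
    (hgE : ∀ t ∈ U, mdown g E t = mdown g' e t)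
    (hΩ : ContDiffOn ℝ (⊤ : ℕ∞) Ω U) (hΩ0 : ∀ t ∈ U, Ω t ≠ 0) :
    List.TFAE [
      ∃ D₀ Dt₀ : Pt n → ℝ, IsWQH U (fun t => Ω t ^ 2 • g t) (fun t => Ω t ^ 2 • g' t) E D₀ Dt₀,
      ∀ t ∈ U, ∀ i m, mdown g E t i * pder m Ω t = mdown g E t m * pder i Ω t,
      ∃ e' Einv : VF n, ∃ Dt₀ k₀ : Pt n → ℝ,
        IsWeakF U c (fun t => Ω t ^ 2 • g' t) E e' Einv Dt₀ k₀
          ∧ TotSym U (fun t => Ω t ^ 2 • g' t) c,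
      ∃ e' Einv : VF n, ∃ Dt₀ k₀ : Pt n → ℝ,
        IsWeakF U c (fun t => Ω t ^ 2 • g' t) E e' Einv Dt₀ k₀] := by
  have hc : IsConformalOn U Ω g _ := ⟨hU, hP.met_h, hΩ, hΩ0, fun _ _ => rfl⟩
  have hc' : IsConformalOn U Ω g' _ := ⟨hU, hP.met_h', hΩ, hΩ0, fun _ _ => rfl⟩
  have closed_iff := hc.isClosedOn_mdown_iff hP.smooth_E (hP.isClosedOn_mdown hU)
  have wedge_iff : (∀ t ∈ U, ∀ i m, mdown g E t i * pder m Ω t = mdown g E t m * pder i Ω t)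
      ↔ ∀ t ∈ U, ∀ i m, mdown g E t i * dlog Ω t m = mdown g E t m * dlog Ω t i :=
    forall₄_congr fun _ ht _ _ => mul_pder_eq_mul_pder_iff
      (differentiableAt_of_contDiffOn hU hΩ ht) (hΩ0 _ ht)
  rw [wedge_iff]
  tfae_have 1 → 2 := fun ⟨_, _, hH⟩ => closed_iff.1 (hH.isClosedOn_mdown hU)
  tfae_have 2 → 1 := fun wedge => ⟨_, _, hP.conformal hc hc' (closed_iff.2 wedge)⟩
  tfae_have 2 → 3 := fun wedge => by
    have hS' := hS.conformal hc' hF.isInvariantMul fun t ht =>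
      (hF.exists_dlog_mapp_iff ht).2 (hgE t ht ▸ wedge t ht)
    exact ⟨e, Einv, _, k, hF.conformal hc' hS', hS'⟩
  tfae_have 3 → 4 := fun ⟨e', Einv', Dt₀, k₀, hH, _⟩ => ⟨e', Einv', Dt₀, k₀, hH⟩
  tfae_have 4 → 2 := fun ⟨_, _, _, _, hH⟩ _ ht i m =>
    hF.wedge_of_conformal hc' hgE hH ht i m
  tfae_finish

/-- For the conformally rescaled pencil (h, h̃) = (Ω²g, Ω²g̃) of a Frobenius
manifold, the following are equivalent: (1) (h, h̃, E) is a weak quasi-homogeneous pencil;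
(2) g(E) ∧ dΩ = 0; (3) (U, •, h̃, E) is an F-manifold; (4) (U, •, h̃, E) is a weak
F-manifold. -/
theorem stmt9 {n : ℕ} (U : Set (Pt n)) (hUopen : IsOpen U) (hUconn : IsConnected U)
    (c : Mul2 n) (g' : Met n) (E e : VF n) (D k : ℝ)
    (hF : IsFrob U c g' E e D k)
    (g : Met n) (d : ℝ) (hI : IsIntersection U c g g' E d)
    (Ω : Pt n → ℝ) (hΩ : ContDiffOn ℝ (⊤ : ℕ∞) Ω U) (hΩ0 : ∀ t ∈ U, Ω t ≠ 0)
    (hreg : RegularTriple U (fun t => (Ω t) ^ 2 • g t) (fun t => (Ω t) ^ 2 • g' t) E) :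
    ((∃ D₀ Dt₀ : Pt n → ℝ,
        IsWQH U (fun t => (Ω t) ^ 2 • g t) (fun t => (Ω t) ^ 2 • g' t) E D₀ Dt₀)
      ↔ (∀ t ∈ U, ∀ i m, (∑ j, g t i j * E t j) * pder m Ω t
          = (∑ j, g t m j * E t j) * pder i Ω t))
    ∧ ((∀ t ∈ U, ∀ i m, (∑ j, g t i j * E t j) * pder m Ω t
          = (∑ j, g t m j * E t j) * pder i Ω t)
      ↔ (∃ e' Einv : VF n, ∃ Dt₀ k₀ : Pt n → ℝ,
          IsWeakF U c (fun t => (Ω t) ^ 2 • g' t) E e' Einv Dt₀ k₀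
            ∧ TotSym U (fun t => (Ω t) ^ 2 • g' t) c))
    ∧ ((∃ e' Einv : VF n, ∃ Dt₀ k₀ : Pt n → ℝ,
          IsWeakF U c (fun t => (Ω t) ^ 2 • g' t) E e' Einv Dt₀ k₀
            ∧ TotSym U (fun t => (Ω t) ^ 2 • g' t) c)
      ↔ (∃ e' Einv : VF n, ∃ Dt₀ k₀ : Pt n → ℝ,
          IsWeakF U c (fun t => (Ω t) ^ 2 • g' t) E e' Einv Dt₀ k₀)) := by
  have tfae := stmt9_general hUopen (hF.isWeakF hI) hF.tot_sym (hF.isWQH hUopen hI)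
    (fun _ ht => hF.mdown_eq_mdown_unit hI ht) hΩ hΩ0
  exact ⟨tfae.out 0 1, tfae.out 1 2, tfae.out 2 3⟩
end
end

section
/- Let n ≥ 2 and let c, d be real numbers, not both zero. On the open set V = {t ∈ ℝ^n : c·t^n + d ≠ 0}, the metric h̃ with components h̃_{ij}(t) = (c·t^n + d)^{−2} δ_{i+j,n+1} is flat: its curvature tensor R(h̃) vanishes identically on V. -/
open scoped BigOperators

noncomputable section

variable {n : ℕ}

/-!
Let `g = φ⁻² η` with `η` constant and `φ` affine. Its Christoffel map is `-φ⁻¹ A` for a constant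
bilinear map `A` built from `dφ` and `η`, and `d(-φ⁻¹) = φ⁻² dφ`. Both the derivative part and the
quadratic part of the curvature are therefore `φ⁻²` times constant expressions in `A`, and they add
up to the curvature tensor of constant curvature `-η⁻¹(dφ, dφ)`. For the antidiagonal `η` and
`φ = c tⁿ + d`, the covector `dφ = c dtⁿ` is null because the last diagonal entry of `η⁻¹` is zero.
-/

section Connection

variable {E : Type*} [NormedAddCommGroup E] [NormedSpace ℝ E]

/-- The covariant derivative `∇_X Y = DY(X) + Γ(X, Y)` of the affine connection with Christoffel
map `Γ` on a normed space. -/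
def covDeriv (Γ : E → E →L[ℝ] E →L[ℝ] E) (X Y : E → E) (t : E) : E :=
  fderiv ℝ Y t (X t) + Γ t (X t) (Y t)

variable {Γ : E → E →L[ℝ] E →L[ℝ] E} {Γ' : E →L[ℝ] E →L[ℝ] E →L[ℝ] E} {X Y Z : E → E} {t : E}

theorem differentiableAt_covDeriv (hΓ : DifferentiableAt ℝ Γ t) (hX : DifferentiableAt ℝ X t)
    (hZ : ContDiffAt ℝ 2 Z t) : DifferentiableAt ℝ (covDeriv Γ X Z) t := by
  have hDZ : DifferentiableAt ℝ (fderiv ℝ Z) t :=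
    (hZ.fderiv_right (m := 1) (by norm_num)).differentiableAt one_ne_zero
  exact (hDZ.clm_apply hX).add ((hΓ.clm_apply hX).clm_apply (hZ.differentiableAt two_ne_zero))

theorem covDeriv_covDeriv (hΓ : HasFDerivAt Γ Γ' t) (hY : DifferentiableAt ℝ Y t)
    (hZ : ContDiffAt ℝ 2 Z t) :
    covDeriv Γ X (covDeriv Γ Y Z) t =
      fderiv ℝ (fderiv ℝ Z) t (X t) (Y t) + fderiv ℝ Z t (fderiv ℝ Y t (X t))
        + (Γ' (X t) (Y t) (Z t) + Γ t (fderiv ℝ Y t (X t)) (Z t) + Γ t (Y t) (fderiv ℝ Z t (X t)))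
        + Γ t (X t) (fderiv ℝ Z t (Y t) + Γ t (Y t) (Z t)) := by
  have hDZ : DifferentiableAt ℝ (fderiv ℝ Z) t :=
    (hZ.fderiv_right (m := 1) (by norm_num)).differentiableAt one_ne_zero
  have hderiv : HasFDerivAt (covDeriv Γ Y Z) _ t :=
    (hDZ.hasFDerivAt.clm_apply hY.hasFDerivAt).add
      ((hΓ.clm_apply hY.hasFDerivAt).clm_apply (hZ.differentiableAt two_ne_zero).hasFDerivAt)
  rw [covDeriv, hderiv.fderiv]
  simp only [covDeriv, ContinuousLinearMap.flip_add, add_apply, ContinuousLinearMap.comp_apply,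
    ContinuousLinearMap.flip_apply, map_add, add_left_inj]
  abel

theorem covDeriv_curvature (hΓ : HasFDerivAt Γ Γ' t) (hX : DifferentiableAt ℝ X t)
    (hY : DifferentiableAt ℝ Y t) (hZ : ContDiffAt ℝ 2 Z t) :
    covDeriv Γ X (covDeriv Γ Y Z) t - covDeriv Γ Y (covDeriv Γ X Z) t
        - covDeriv Γ (VectorField.lieBracket ℝ X Y) Z t =
      Γ' (X t) (Y t) (Z t) - Γ' (Y t) (X t) (Z t)
        + (Γ t (X t) (Γ t (Y t) (Z t)) - Γ t (Y t) (Γ t (X t) (Z t))) := by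
  have hsymm : fderiv ℝ (fderiv ℝ Z) t (X t) (Y t) = fderiv ℝ (fderiv ℝ Z) t (Y t) (X t) :=
    hZ.isSymmSndFDerivAt (by simp) (X t) (Y t)
  rw [covDeriv_covDeriv hΓ hY hZ, covDeriv_covDeriv hΓ hX hZ, hsymm]
  simp only [covDeriv, VectorField.lieBracket, map_add, map_sub, sub_apply]
  abel

end Connection

section ConformalTensor

variable {E : Type*} [NormedAddCommGroup E] [NormedSpace ℝ E]

/-- The bilinear map `A(u, v) = ℓ(u) v + ℓ(v) u - B(u, v) w`. When `w` is the gradient of an affine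
function `φ` with respect to the constant metric `B` and `ℓ = dφ`, the metric `φ⁻² B` has
Christoffel map `-φ⁻¹ A`. -/
def conformalTensor (B : E →L[ℝ] E →L[ℝ] ℝ) (ℓ : E →L[ℝ] ℝ) (w : E) : E →L[ℝ] E →L[ℝ] E :=
  ℓ.smulRight (.id ℝ E) + (ℓ.smulRight (.id ℝ E)).flip
    - (ContinuousLinearMap.compL ℝ E ℝ E (.toSpanSingleton ℝ w)).comp B

theorem conformalTensor_apply (B : E →L[ℝ] E →L[ℝ] ℝ) (ℓ : E →L[ℝ] ℝ) (w u v : E) :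
    conformalTensor B ℓ w u v = ℓ u • v + ℓ v • u - B u v • w := by
  simp [conformalTensor]

-- The left side is the curvature of the Christoffel map `-φ⁻¹ A` at a point where `φ⁻¹ = p`.
theorem conformalTensor_curvature {B : E →L[ℝ] E →L[ℝ] ℝ} {ℓ : E →L[ℝ] ℝ} {w : E}
    (hB : ∀ u v, B u v = B v u) (hw : ∀ u, B u w = ℓ u) (p : ℝ) (x y z : E) :
    (p ^ 2 • ℓ).smulRight (conformalTensor B ℓ w) x y z
        - (p ^ 2 • ℓ).smulRight (conformalTensor B ℓ w) y x z
        + ((-p • conformalTensor B ℓ w) x ((-p • conformalTensor B ℓ w) y z)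
          - (-p • conformalTensor B ℓ w) y ((-p • conformalTensor B ℓ w) x z)) =
      -ℓ w • ((p ^ 2 * B y z) • x - (p ^ 2 * B x z) • y) := by
  simp only [ContinuousLinearMap.smulRight_apply, smul_apply, conformalTensor_apply, map_add,
    map_sub, map_smul, smul_eq_mul, hw, hB y x]
  module

theorem hasFDerivAt_neg_inv_smul {F : Type*} [NormedAddCommGroup F] [NormedSpace ℝ F] {φ : E → ℝ}
    {φ' : E →L[ℝ] ℝ} {t : E} (hφ : HasFDerivAt φ φ' t) (ht : φ t ≠ 0) (A : F) :
    HasFDerivAt (fun s => -(φ s)⁻¹ • A) (((φ t)⁻¹ ^ 2 • φ').smulRight A) t := by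
  have hinv : HasFDerivAt (fun s => -(φ s)⁻¹) ((φ t)⁻¹ ^ 2 • φ') t :=
    ((hasDerivAt_inv ht).comp_hasFDerivAt t hφ).neg.congr_fderiv (by simp)
  exact hinv.smul_const A

end ConformalTensor

/-- The Christoffel symbols of `g` at `t`, as the bilinear map `(u, v) ↦ Γ^k_{ij} u^i v^j`. -/
def chrMap (g : Met n) (t : Pt n) : Pt n →L[ℝ] Pt n →L[ℝ] Pt n :=
  ∑ i, ∑ j, (ContinuousLinearMap.proj (φ := fun _ : Fin n => ℝ) i).smulRight
    ((ContinuousLinearMap.proj (φ := fun _ : Fin n => ℝ) j).smulRight fun k => chr g k i j t)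

theorem chrMap_apply (g : Met n) (t u v : Pt n) (k : Fin n) :
    chrMap g t u v k = ∑ i, ∑ j, u i * (v j * chr g k i j t) := by
  simp [chrMap]

section Coordinates

variable {g : Met n} {X Y Z : VF n} {t : Pt n}

theorem sum_mul_pder (hY : DifferentiableAt ℝ Y t) (v : Pt n) (k : Fin n) :
    ∑ i, v i * pder i (fun s => Y s k) t = fderiv ℝ Y t v k := by
  have hpder (i : Fin n) : pder i (fun s => Y s k) t = fderiv ℝ Y t (Pi.single i 1) k := by
    rw [pder, fderiv_apply hY]
    rfl
  conv_rhs => rw [pi_eq_sum_univ' v]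
  simp [hpder]

theorem covV_eq_covDeriv (X : VF n) (hY : DifferentiableAt ℝ Y t) :
    covV g X Y t = covDeriv (chrMap g) X Y t := by
  ext k
  simp only [covV, covDeriv, chrMap_apply, mul_add, Finset.sum_add_distrib, sum_mul_pder hY,
    Finset.mul_sum, Pi.add_apply, mul_comm (chr g _ _ _ _)]

theorem vbr_eq_lieBracket (hX : DifferentiableAt ℝ X t) (hY : DifferentiableAt ℝ Y t) :
    vbr X Y t = VectorField.lieBracket ℝ X Y t := by
  ext k
  simp only [vbr, VectorField.lieBracket, Finset.sum_sub_distrib, sum_mul_pder hX,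
    sum_mul_pder hY, Pi.sub_apply]

theorem covV_covV_eq_covDeriv (hg : DifferentiableAt ℝ (chrMap g) t) (X : VF n)
    (hY : DifferentiableAt ℝ Y t) (hZ : ContDiffAt ℝ 2 Z t) :
    covV g X (covV g Y Z) t = covDeriv (chrMap g) X (covDeriv (chrMap g) Y Z) t := by
  have hev : covV g Y Z =ᶠ[nhds t] covDeriv (chrMap g) Y Z := by
    filter_upwards [hZ.eventually (by simp)] with s hs
    exact covV_eq_covDeriv Y (hs.differentiableAt two_ne_zero)
  have hdiff := (differentiableAt_covDeriv hg hY hZ).congr_of_eventuallyEq hev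
  rw [covV_eq_covDeriv X hdiff, covDeriv, covDeriv, hev.fderiv_eq, hev.eq_of_nhds]

theorem curvV_eq_of_hasFDerivAt_chrMap {Γ' : Pt n →L[ℝ] Pt n →L[ℝ] Pt n →L[ℝ] Pt n}
    (hg : HasFDerivAt (chrMap g) Γ' t) (hX : DifferentiableAt ℝ X t)
    (hY : DifferentiableAt ℝ Y t) (hZ : ContDiffAt ℝ 2 Z t) :
    curvV g X Y Z t =
      Γ' (X t) (Y t) (Z t) - Γ' (Y t) (X t) (Z t)
        + (chrMap g t (X t) (chrMap g t (Y t) (Z t))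
          - chrMap g t (Y t) (chrMap g t (X t) (Z t))) := by
  have hbracket : covV g (vbr X Y) Z t =
      covDeriv (chrMap g) (VectorField.lieBracket ℝ X Y) Z t := by
    rw [covV_eq_covDeriv _ (hZ.differentiableAt two_ne_zero), covDeriv, covDeriv,
      vbr_eq_lieBracket hX hY]
  rw [← covDeriv_curvature hg hX hY hZ, ← hbracket,
    ← covV_covV_eq_covDeriv hg.differentiableAt X hY hZ,
    ← covV_covV_eq_covDeriv hg.differentiableAt Y hX hZ]
  rfl

theorem SmoothVF.contDiffAt {U : Set (Pt n)} (hX : SmoothVF U X) (hU : U ∈ nhds t) :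
    ContDiffAt ℝ (⊤ : ℕ∞) X t :=
  (contDiffOn_pi.2 hX).contDiffAt hU

end Coordinates

section AffineConformal

open Matrix

/-- The metric `φ⁻² η` on `ℝⁿ`, with `η` constant and `φ(t) = a ⬝ᵥ t + b` affine. It takes the
junk value `0` where `φ` vanishes. -/
def affineConformal (η : Matrix (Fin n) (Fin n) ℝ) (a : Pt n) (b : ℝ) : Met n :=
  fun t => ((a ⬝ᵥ t + b) ^ 2)⁻¹ • η

/-- The linear form `t ↦ a ⬝ᵥ t`, as a continuous linear map. -/
def dotProductCLM (a : Pt n) : Pt n →L[ℝ] ℝ :=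
  LinearMap.toContinuousLinearMap (dotProductBilin ℝ ℝ a)

theorem dotProductCLM_apply (a t : Pt n) : dotProductCLM a t = a ⬝ᵥ t := rfl

theorem hasFDerivAt_dotProduct_add (a : Pt n) (b : ℝ) (t : Pt n) :
    HasFDerivAt (fun s => a ⬝ᵥ s + b) (dotProductCLM a) t :=
  (dotProductCLM a).hasFDerivAt.add_const b

/-- The bilinear form `(u, v) ↦ u ⬝ᵥ η *ᵥ v`, as a continuous bilinear map. -/
def matrixBilinCLM (η : Matrix (Fin n) (Fin n) ℝ) : Pt n →L[ℝ] Pt n →L[ℝ] ℝ :=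
  LinearMap.toContinuousBilinearMap (toBilin' η)

theorem matrixBilinCLM_apply (η : Matrix (Fin n) (Fin n) ℝ) (u v : Pt n) :
    matrixBilinCLM η u v = u ⬝ᵥ η *ᵥ v :=
  toBilin'_apply' η u v

theorem mdown2_eq_dotProduct_mulVec (g : Met n) (X Y : VF n) (t : Pt n) :
    mdown2 g X Y t = X t ⬝ᵥ g t *ᵥ Y t := by
  simp only [mdown2, dotProduct, mulVec, Finset.mul_sum]
  exact Finset.sum_congr rfl fun i _ => Finset.sum_congr rfl fun j _ => by ring

variable {η : Matrix (Fin n) (Fin n) ℝ} {a t : Pt n} {b : ℝ}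

theorem pder_affineConformal (ht : a ⬝ᵥ t + b ≠ 0) (i j l : Fin n) :
    pder i (fun s => affineConformal η a b s j l) t =
      -2 / (a ⬝ᵥ t + b) ^ 3 * (a i * η j l) := by
  have hderiv : HasFDerivAt (fun s => affineConformal η a b s j l) _ t :=
    ((hasDerivAt_inv (pow_ne_zero 2 ht)).comp_hasFDerivAt t
      ((hasFDerivAt_dotProduct_add a b t).pow 2)).mul_const (η j l)
  rw [pder, hderiv.fderiv]
  simp only [Nat.add_one_sub_one, pow_one, smul_add, nsmul_eq_mul, Nat.cast_ofNat, neg_smul,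
    smul_neg, _root_.neg_apply, _root_.smul_apply, dotProductCLM_apply, dotProduct_single, mul_one,
    smul_eq_mul]
  field_simp

theorem inv_affineConformal (hη : IsUnit η) (ht : a ⬝ᵥ t + b ≠ 0) :
    (affineConformal η a b t)⁻¹ = (a ⬝ᵥ t + b) ^ 2 • η⁻¹ := by
  rw [affineConformal]
  refine Matrix.inv_eq_left_inv ?_
  rw [smul_mul_smul_comm, mul_inv_cancel₀ (pow_ne_zero 2 ht),
    nonsing_inv_mul _ ((isUnit_iff_isUnit_det η).1 hη), one_smul]

theorem chr_affineConformal (hs : η.IsSymm) (hη : IsUnit η) (ht : a ⬝ᵥ t + b ≠ 0)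
    (k i j : Fin n) :
    chr (affineConformal η a b) k i j t =
      -(a ⬝ᵥ t + b)⁻¹ * (a i * (1 : Matrix (Fin n) (Fin n) ℝ) k j
        + a j * (1 : Matrix (Fin n) (Fin n) ℝ) k i - (η⁻¹ *ᵥ a) k * η i j) := by
  have hcontract (i j : Fin n) : ∑ l, η⁻¹ k l * (a i * η j l) =
      a i * (1 : Matrix (Fin n) (Fin n) ℝ) k j := by
    rw [← nonsing_inv_mul _ ((isUnit_iff_isUnit_det η).1 hη), mul_apply, Finset.mul_sum]
    exact Finset.sum_congr rfl fun l _ => by rw [hs.apply]; ring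
  have hgrad : ∑ l, η⁻¹ k l * (a l * η i j) = (η⁻¹ *ᵥ a) k * η i j := by
    simp only [mulVec, dotProduct, Finset.sum_mul, mul_assoc]
  simp only [chr, inv_affineConformal hη ht, pder_affineConformal ht, ← hcontract, ← hgrad,
    ← Finset.sum_add_distrib, ← Finset.sum_sub_distrib, Finset.mul_sum,
    Matrix.smul_apply, smul_eq_mul]
  refine Finset.sum_congr rfl fun l _ => ?_
  field_simp
  ring

theorem chrMap_affineConformal (hs : η.IsSymm) (hη : IsUnit η) (ht : a ⬝ᵥ t + b ≠ 0) :
    chrMap (affineConformal η a b) t =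
      -(a ⬝ᵥ t + b)⁻¹ • conformalTensor (matrixBilinCLM η) (dotProductCLM a) (η⁻¹ *ᵥ a) := by
  ext u v k
  have hfst : ∑ i, ∑ j, u i * (v j * (a i * (1 : Matrix (Fin n) (Fin n) ℝ) k j)) =
      (a ⬝ᵥ u) * v k := by
    simp only [one_apply, mul_ite, mul_one, mul_zero, Finset.sum_ite_eq, Finset.mem_univ, if_true,
      dotProduct, Finset.sum_mul]
    exact Finset.sum_congr rfl fun i _ => by ring
  have hsnd : ∑ i, ∑ j, u i * (v j * (a j * (1 : Matrix (Fin n) (Fin n) ℝ) k i)) =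
      (a ⬝ᵥ v) * u k := by
    rw [Finset.sum_comm]
    simp only [one_apply, mul_ite, mul_one, mul_zero, Finset.sum_ite_eq, Finset.mem_univ, if_true,
      dotProduct, Finset.sum_mul]
    exact Finset.sum_congr rfl fun j _ => by ring
  have htrd : ∑ i, ∑ j, u i * (v j * ((η⁻¹ *ᵥ a) k * η i j)) =
      (u ⬝ᵥ η *ᵥ v) * (η⁻¹ *ᵥ a) k := by
    generalize (η⁻¹ *ᵥ a) k = w
    simp only [dotProduct, mulVec, Finset.mul_sum, Finset.sum_mul]
    exact Finset.sum_congr rfl fun i _ => Finset.sum_congr rfl fun j _ => by ring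
  simp only [chrMap_apply, chr_affineConformal hs hη ht, _root_.smul_apply, Pi.smul_apply,
    conformalTensor_apply, matrixBilinCLM_apply, dotProductCLM_apply, Pi.add_apply, Pi.sub_apply,
    smul_eq_mul, ← hfst, ← hsnd, ← htrd, ← Finset.sum_add_distrib, ← Finset.sum_sub_distrib,
    Finset.mul_sum]
  exact Finset.sum_congr rfl fun i _ => Finset.sum_congr rfl fun j _ => by ring

theorem hasFDerivAt_chrMap_affineConformal (hs : η.IsSymm) (hη : IsUnit η)
    (ht : a ⬝ᵥ t + b ≠ 0) :
    HasFDerivAt (chrMap (affineConformal η a b))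
      (((a ⬝ᵥ t + b)⁻¹ ^ 2 • dotProductCLM a).smulRight
        (conformalTensor (matrixBilinCLM η) (dotProductCLM a) (η⁻¹ *ᵥ a))) t := by
  have hφ := hasFDerivAt_dotProduct_add a b t
  refine HasFDerivAt.congr_of_eventuallyEq (hasFDerivAt_neg_inv_smul hφ ht
    (conformalTensor (matrixBilinCLM η) (dotProductCLM a) (η⁻¹ *ᵥ a))) ?_
  filter_upwards [hφ.continuousAt.eventually_ne ht] with s hs'
  exact chrMap_affineConformal hs hη hs'

theorem curvV_affineConformal (hs : η.IsSymm) (hη : IsUnit η) (ht : a ⬝ᵥ t + b ≠ 0)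
    {X Y Z : VF n} (hX : DifferentiableAt ℝ X t) (hY : DifferentiableAt ℝ Y t)
    (hZ : ContDiffAt ℝ 2 Z t) :
    curvV (affineConformal η a b) X Y Z t =
      -(a ⬝ᵥ η⁻¹ *ᵥ a) • (mdown2 (affineConformal η a b) Y Z t • X t
        - mdown2 (affineConformal η a b) X Z t • Y t) := by
  have hsymm (u v : Pt n) : matrixBilinCLM η u v = matrixBilinCLM η v u := by
    rw [matrixBilinCLM_apply, matrixBilinCLM_apply, dotProduct_mulVec, ← mulVec_transpose, hs.eq,
      dotProduct_comm]
  have hgrad (u : Pt n) : matrixBilinCLM η u (η⁻¹ *ᵥ a) = dotProductCLM a u := by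
    rw [matrixBilinCLM_apply, mulVec_mulVec, mul_nonsing_inv _ ((isUnit_iff_isUnit_det η).1 hη),
      one_mulVec, dotProduct_comm, dotProductCLM_apply]
  have hmetric (V W : VF n) : mdown2 (affineConformal η a b) V W t =
      (a ⬝ᵥ t + b)⁻¹ ^ 2 * matrixBilinCLM η (V t) (W t) := by
    rw [mdown2_eq_dotProduct_mulVec, affineConformal, smul_mulVec, dotProduct_smul, smul_eq_mul,
      matrixBilinCLM_apply, inv_pow]
  rw [curvV_eq_of_hasFDerivAt_chrMap (hasFDerivAt_chrMap_affineConformal hs hη ht) hX hY hZ,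
    chrMap_affineConformal hs hη ht, conformalTensor_curvature hsymm hgrad, hmetric, hmetric,
    dotProductCLM_apply]

theorem stmt12_general (hs : η.IsSymm) (hη : IsUnit η) (hnull : a ⬝ᵥ η⁻¹ *ᵥ a = 0) :
    FlatOn {t | a ⬝ᵥ t + b ≠ 0} (affineConformal η a b) := by
  intro X Y Z hX hY hZ t ht k
  have hU : {t : Pt n | a ⬝ᵥ t + b ≠ 0} ∈ nhds t :=
    (hasFDerivAt_dotProduct_add a b t).continuousAt.eventually_ne ht
  have hdiff {W : VF n} (hW : SmoothVF {t | a ⬝ᵥ t + b ≠ 0} W) : DifferentiableAt ℝ W t :=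
    (hW.contDiffAt hU).differentiableAt (by simp)
  rw [curvV_affineConformal hs hη ht (hdiff hX) (hdiff hY)
    ((hZ.contDiffAt hU).of_le (WithTop.coe_le_coe.2 le_top)), hnull, neg_zero, zero_smul,
    Pi.zero_apply]

end AffineConformal

section Antidiagonal

open Matrix

theorem inv_permMatrix {m R : Type*} [Fintype m] [DecidableEq m] [CommRing R]
    (σ : Equiv.Perm m) : (σ.permMatrix R)⁻¹ = σ⁻¹.permMatrix R :=
  inv_eq_left_inv (by rw [← permMatrix_mul, mul_inv_cancel, permMatrix_one])

theorem isUnit_permMatrix {m R : Type*} [Fintype m] [DecidableEq m] [CommRing R]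
    (σ : Equiv.Perm m) : IsUnit (σ.permMatrix R) := by
  rw [isUnit_iff_isUnit_det, det_permutation]
  exact (Equiv.Perm.sign σ).isUnit.map (Int.castRingHom R)

theorem isSymm_permMatrix {m R : Type*} [DecidableEq m] [Zero R] [One R] {σ : Equiv.Perm m}
    (hσ : σ⁻¹ = σ) : (σ.permMatrix R).IsSymm := by
  rw [IsSymm, transpose_permMatrix, hσ]

theorem single_dotProduct_permMatrix_mulVec_single {m R : Type*} [Fintype m] [DecidableEq m]
    [CommRing R] {σ : Equiv.Perm m} {i : m} (hi : σ i ≠ i) (c : R) :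
    Pi.single i c ⬝ᵥ σ.permMatrix R *ᵥ Pi.single i c = 0 := by
  rw [permMatrix_mulVec, single_dotProduct, Function.comp_apply, Pi.single_eq_of_ne hi, mul_zero]

theorem affineConformal_permMatrix_revPerm (N : Fin n) (c d : ℝ) :
    affineConformal (Fin.revPerm.permMatrix ℝ) (Pi.single N c) d =
      fun t => of fun i j : Fin n => if j = i.rev then ((c * t N + d) ^ 2)⁻¹ else 0 := by
  ext t i j
  simp [affineConformal, eq_comm]

theorem flatOn_antidiagonal {N : Fin n} (hN : N.rev ≠ N) (c d : ℝ) :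
    FlatOn {t : Pt n | c * t N + d ≠ 0}
      (fun t => of fun i j : Fin n => if j = i.rev then ((c * t N + d) ^ 2)⁻¹ else 0) := by
  have hinv : (Fin.revPerm.permMatrix ℝ : Matrix (Fin n) (Fin n) ℝ)⁻¹ =
      Fin.revPerm.permMatrix ℝ := inv_permMatrix Fin.revPerm
  have hflat := stmt12_general (b := d) (isSymm_permMatrix (R := ℝ) (σ := Fin.revPerm) rfl)
    (isUnit_permMatrix _) (hinv ▸ single_dotProduct_permMatrix_mulVec_single hN c)
  rw [affineConformal_permMatrix_revPerm] at hflat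
  simpa only [single_dotProduct] using hflat

end Antidiagonal

/-- The metric h̃_{ij}(t) = (c t^n + d)^{-2} δ_{i+j,n+1} is flat on
{t : c t^n + d ≠ 0}. -/
theorem stmt12 {n : ℕ} (hn : 2 ≤ n) (c d : ℝ) (hcd : c ≠ 0 ∨ d ≠ 0) :
    FlatOn {t : Pt n | c * t ⟨n - 1, by omega⟩ + d ≠ 0}
      (fun t => Matrix.of fun i j : Fin n =>
        if j = i.rev then ((c * t ⟨n - 1, by omega⟩ + d) ^ 2)⁻¹ else 0) := by
  exact flatOn_antidiagonal (by simp only [ne_eq, Fin.ext_iff, Fin.val_rev]; omega) c d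
end
end
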